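/- arXiv:2405.14387 — 2 statements merged into one kernel-verified Lean document; each statement's English description precedes it below -/
import Mathlib

section
/- Let δ > 0, L₀ > 0 and Δ₀ > 0. There exists τ₁ > 0, depending only on δ, L₀ and Δ₀, with the following property. Let G be a group acting by isometries on a δ-hyperbolic geodesic metric space X, let p ∈ X, and let U ⊆ G be a subset with |U| ≥ 2 that is 200δ-reduced at p and satisfies 0 < L(U,p) ≤ L₀. Let 𝒴 be a collection of subsets of X such that: every Y ∈ 𝒴 is 10δ-quasi-convex; for every Y ∈ 𝒴 there is a 10³δ-local (1,δ)-quasi-geodesic γ_Y : ℝ → X whose image is contained in Y and such that Y is contained in the 99δ-neighbourhood of the image of γ_Y; and diam(Y₁^{+L₀} ∩ Y₂^{+L₀}) ≤ Δ₀ for all distinct Y₁,Y₂ ∈ 𝒴. For τ > 0, let F(τ) be the set of elements w of the free group F(U) admitting no factorization w ≡ w₀w₁w₂ as reduced words in which w₁ is a τ-shortening word over some Y ∈ 𝒴, and let B_U(n) = {w ∈ F(U) : |w|_U ≤ n}. Then for every τ ≥ τ₁ and every n ≥ 0: |F(τ) ∩ B_U(n+1)| ≥ |U| · |F(τ) ∩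 B_U(n)|, and in particular |F(τ) ∩ B_U(n)| ≥ |U|^n. -/
/-!
Two facts about shortening words carry the proof, with a single integer `M` depending only on
`δ`, `L₀`, `Δ₀`:

* every shortening word has length at least `2M + 2`;
* a shortening word of given length is determined by its prefix of length `M`, whatever the set
  of the family it is shortening over.

The first holds because a word of length `m` moves `p` by at most `L₀ m`, so `τ₁ = L₀ (2M + 3)`
suffices. For the second, reducedness of `U` makes the broken geodesic through the vertices of a
reduced word non-backtracking, with errors independent of its length (`no_backtrack_last`,
`no_backtrack_first`), so that words make linear progress (`word_dist`) and their interior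
vertices stay near the geodesic joining their endpoints (`interior_vertex`). Choose `M` so that
words of length `M` move `p` by more than `Δ₀ + L₀ + 1000δ`. If two shortening words share a
prefix `c` of length `M`, quasi-convexity puts `p` and `c • p` in the `L₀`-neighbourhoods of both
sets, so these sets coincide (`cylinder_unique`). Both words then start near a point `y₀` and end
near points `y`, `y'` of one set `Y`, which is close to a local quasi-geodesic line; hence one of
the three points is nearly between the two others (`line_trichotomy`). It is not `y₀`, since both
words follow `c` for a long time, and it is neither `y` nor `y'` if the words diverge
(`not_between`): the endpoint of one word would lie close to the geodesic from `p` to the endpoint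
of the other. So the words are equal (`word_unique`).

Write `k = |U|` and `f n` for the number of shortening-free words of length at most `n`. There are
at most `(2k) ^ M` shortening words of each length. A word obtained from a shortening-free one by
appending a letter is non-reduced, or shortening-free, or a shortening-free word followed by a
shortening word (`extension_cases`), whence
`2k f(n) ≤ f(n) + f(n + 1) + ∑ j, f(n - 2M - 1 - j) (2k) ^ M`. By induction the `j`-th summand is
at most `f(n) k ^ (-2M - 1 - j) (2k) ^ M ≤ f(n) / 2 ^ (j + 1)` because `2 ≤ k`, so the sum is at
most `f(n)` and `f(n + 1) ≥ (2k - 2) f(n) ≥ k f(n)` (`growth_of_recursion`).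
-/

open Pointwise Filter

noncomputable section

universe u v

/-- The Gromov product `(x,y)_t`. -/
def gromov {X : Type*} [MetricSpace X] (x y t : X) : ℝ :=
  (dist x t + dist y t - dist x y) / 2

/-- `X` is `δ`-hyperbolic (four point inequality). -/
def IsDeltaHyperbolic (X : Type*) [MetricSpace X] (δ : ℝ) : Prop :=
  ∀ x y z t : X, min (gromov x y t) (gromov y z t) - δ ≤ gromov x z t

/-- `X` is a geodesic metric space: any two points are joined by an isometric
embedding of a closed real interval. -/
def IsGeodesicSpace (X : Type*) [MetricSpace X] : Prop :=
  ∀ x y : X, ∃ f : ℝ → X, f 0 = x ∧ f (dist x y) = y ∧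
    ∀ s ∈ Set.Icc (0 : ℝ) (dist x y), ∀ t ∈ Set.Icc (0 : ℝ) (dist x y),
      dist (f s) (f t) = |s - t|

/-- The action of `G` on `X` is by isometries. -/
def IsometricAction (G X : Type*) [Group G] [MetricSpace X] [MulAction G X] : Prop :=
  ∀ g : G, Isometry fun x : X => g • x

/-- The action of `G` on `X` is `(κ,N)`-acylindrical (relative to the
hyperbolicity constant `δ`). -/
def AcylindricalAction (G X : Type*) [Group G] [MetricSpace X] [MulAction G X]
    (δ κ N : ℝ) : Prop :=
  ∀ x y : X, κ ≤ dist x y →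
    {g : G | dist (g • x) x ≤ 100 * δ ∧ dist (g • y) y ≤ 100 * δ}.Finite ∧
    ({g : G | dist (g • x) x ≤ 100 * δ ∧ dist (g • y) y ≤ 100 * δ}.ncard : ℝ) ≤ N

/-- `L(U,x)`, the `ℓ^∞`-energy of `U` at `x`. -/
def energyAt {G X : Type*} [Group G] [MetricSpace X] [MulAction G X]
    (U : Set G) (x : X) : ℝ :=
  sSup ((fun u : G => dist (u • x) x) '' U)

/-- `L(U)`, the `ℓ^∞`-energy of `U`. -/
def energy {G : Type*} (X : Type*) [Group G] [MetricSpace X] [MulAction G X]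
    (U : Set G) : ℝ :=
  sInf (Set.range fun x : X => energyAt U x)

/-- The stable translation length `‖g‖^∞`, computed at the point `x` (for an
isometric action, by Fekete's subadditive lemma this infimum equals the limit of
`d(gⁿx,x)/n` and is independent of `x`). -/
def stableLength {G X : Type*} [Group G] [MetricSpace X] [MulAction G X]
    (g : G) (x : X) : ℝ :=
  ⨅ n : ℕ+, dist ((g ^ (n : ℕ)) • x) x / ((n : ℕ) : ℝ)

/-- `g` is loxodromic for the action on `X`. -/
def IsLoxodromic {G : Type*} (X : Type*) [Group G] [MetricSpace X] [MulAction G X]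
    (g : G) : Prop :=
  ∀ x : X, 0 < stableLength g x

/-- The translation length `‖g‖`. -/
def translationLength {G : Type*} (X : Type*) [Group G] [MetricSpace X] [MulAction G X]
    (g : G) : ℝ :=
  sInf (Set.range fun x : X => dist (g • x) x)

/-- The axis of `g`. -/
def axisOf {G X : Type*} [Group G] [MetricSpace X] [MulAction G X]
    (δ : ℝ) (g : G) : Set X :=
  {x : X | dist (g • x) x ≤ translationLength X g + 8 * δ}

/-- The exponential growth rate `ω(U) = limsup (1/n) log |Uⁿ|`. -/
def growthRate {G : Type*} [Group G] (U : Set G) : ℝ :=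
  limsup (fun n : ℕ => Real.log ((U ^ n).ncard : ℝ) / (n : ℝ)) atTop

/-- `S` is `α`-reduced at `p`. -/
def ReducedAt {G X : Type*} [Group G] [MetricSpace X] [MulAction G X]
    (δ α : ℝ) (S : Set G) (p : X) : Prop :=
  S ∩ S⁻¹ = ∅ ∧
  ∀ u₁ ∈ S ∪ S⁻¹, ∀ u₂ ∈ S ∪ S⁻¹, u₁ ≠ u₂ →
    gromov (u₁ • p) (u₂ • p) p <
      min (dist (u₁ • p) p) (dist (u₂ • p) p) / 2 - α - 50 * δ

/-- A group is virtually cyclic if it has a cyclic subgroup of finite index. -/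
def VirtuallyCyclic (H : Type*) [Group H] : Prop :=
  ∃ K : Subgroup H, IsCyclic K ∧ K.FiniteIndex

/-- A group is virtually nilpotent if it has a nilpotent subgroup of finite index. -/
def VirtuallyNilpotent (H : Type*) [Group H] : Prop :=
  ∃ K : Subgroup H, Group.IsNilpotent K ∧ K.FiniteIndex

/-- An `L`-local `(1,δ)`-quasi-geodesic line. -/
def IsLocalQuasiGeodesic {X : Type*} [MetricSpace X] (L δ : ℝ) (γ : ℝ → X) : Prop :=
  ∀ s t : ℝ, |s - t| ≤ L → dist (γ s) (γ t) ≤ |s - t| ∧ |s - t| ≤ dist (γ s) (γ t) + δ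

/-- `Y` is `σ`-quasi-convex. -/
def SigmaQuasiConvex {X : Type*} [MetricSpace X] (σ : ℝ) (Y : Set X) : Prop :=
  ∀ x : X, ∀ y ∈ Y, ∀ y' ∈ Y, Metric.infDist x Y ≤ gromov y y' x + σ

/-- `y` is a `δ`-projection of `x` on `Y`. -/
def IsDProj {X : Type*} [MetricSpace X] (δ : ℝ) (Y : Set X) (x y : X) : Prop :=
  y ∈ Y ∧ dist x y ≤ Metric.infDist x Y + δ

/-- `l` is a reduced word over `U ∪ U⁻¹`. -/
def IsWordOver {G : Type*} [Group G] (U : Set G) (l : List G) : Prop :=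
  (∀ a ∈ l, a ∈ U ∪ U⁻¹) ∧ l.Chain' fun a b => b ≠ a⁻¹

/-- `l` is a `τ`-shortening word over `Y` (relative to `U` and `p`). -/
def IsShorteningWord {G X : Type*} [Group G] [MetricSpace X] [MulAction G X]
    (δ τ : ℝ) (U : Set G) (p : X) (Y : Set X) (l : List G) : Prop :=
  l ≠ [] ∧ IsWordOver U l ∧
  ∃ y₀ y₁ : X, IsDProj δ Y p y₀ ∧ IsDProj δ Y (l.prod • p) y₁ ∧
    τ < dist y₀ y₁ ∧
    (∀ a ∈ l.head?, dist p y₀ ≤ dist (a • p) p / 2 - 200 * δ) ∧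
    (∀ a ∈ l.getLast?, dist (l.prod • p) y₁ ≤ dist (a • p) p / 2 - 200 * δ)

/-- `l` is a `τ`-shortening-free word relative to the family `Ys`. -/
def ShorteningFreeWord {G X : Type*} [Group G] [MetricSpace X] [MulAction G X]
    (δ τ : ℝ) (U : Set G) (p : X) (Ys : Set (Set X)) (l : List G) : Prop :=
  IsWordOver U l ∧
  ∀ Y ∈ Ys, ∀ l₀ l₁ l₂ : List G, l = l₀ ++ l₁ ++ l₂ → ¬ IsShorteningWord δ τ U p Y l₁

/-- The word length of an element of a free group. -/
def fgNorm {α : Type*} (w : FreeGroup α) : ℕ :=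
  letI := Classical.decEq α
  w.toWord.length

/-- `w` is a prefix of `r` in the free group. -/
def FGPrefix {α : Type*} (w r : FreeGroup α) : Prop :=
  fgNorm r = fgNorm w + fgNorm (w⁻¹ * r)

/-- `r'` is a cyclic permutation of `r`. -/
def IsCyclicPerm {α : Type*} (r r' : FreeGroup α) : Prop :=
  ∃ w v : FreeGroup α, r = w * v ∧ fgNorm r = fgNorm w + fgNorm v ∧
    r' = v * w ∧ fgNorm r' = fgNorm v + fgNorm w

/-- `q` is a piece of the set of relators `R`. -/
def IsPiece {α : Type*} (R : Set (FreeGroup α)) (q : FreeGroup α) : Prop :=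
  q ≠ 1 ∧ ∃ r₁ ∈ R, ∃ r₂ ∈ R, r₁ ≠ r₂ ∧ FGPrefix q r₁ ∧ FGPrefix q r₂

/-- `ξ`-uniform uniform exponential growth: every finitely generated subgroup is
either virtually nilpotent or has `ξ`-uniform exponential growth. -/
def UUEG (ξ : ℝ) (Q : Type*) [Group Q] : Prop :=
  ∀ H : Subgroup Q, H.FG →
    (VirtuallyNilpotent H ∨
      ∀ U : Set H, U.Finite → U⁻¹ = U → Subgroup.closure U = ⊤ → ξ < growthRate U)

/-! ### Gromov products and local quasi-geodesic lines -/

section Metric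

variable {X : Type*} [MetricSpace X]

lemma gromov_nonneg (x y t : X) : 0 ≤ gromov x y t := by
  have := dist_triangle_right x y t
  unfold gromov; linarith

lemma gromov_symm (x y t : X) : gromov x y t = gromov y x t := by
  unfold gromov; rw [dist_comm x y]; ring

/-- The products `(x,t)_s` and `(x,s)_t` split the distance from `s` to `t`. -/
lemma gromov_add (x s t : X) : gromov x t s + gromov x s t = dist s t := by
  unfold gromov; rw [dist_comm t s]; ring

lemma gromov_ge_sub (x y t : X) : dist x t - dist x y ≤ gromov x y t := by
  have := dist_triangle_left x t y
  have := dist_comm x y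
  have := dist_triangle x y t
  unfold gromov; linarith

lemma gromov_base (x y t t' : X) : gromov x y t ≤ gromov x y t' + dist t t' := by
  have h1 := dist_triangle_right x t t'
  have h2 := dist_triangle_right y t t'
  unfold gromov; linarith

lemma gromov_left (x x' y t : X) : gromov x y t ≤ gromov x' y t + dist x x' := by
  have h1 := dist_triangle x x' t
  have h2 := dist_triangle_left x' y x
  unfold gromov; linarith

lemma gromov_right (x y y' t : X) : gromov x y t ≤ gromov x y' t + dist y y' := by
  rw [gromov_symm x y, gromov_symm x y']; exact gromov_left _ _ _ _

/-- If `(y,z)_t` is large, a bound on `(x,z)_t` passes to `(x,y)_t`. -/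
lemma hyp_le {δ : ℝ} (hH : IsDeltaHyperbolic X δ) {x y z t : X} {c : ℝ}
    (h1 : gromov x z t ≤ c) (h2 : c + δ < gromov y z t) : gromov x y t ≤ c + δ := by
  have := hH x y z t
  rcases min_choice (gromov x y t) (gromov y z t) with h | h <;> rw [h] at this <;> linarith

lemma hyp_ge {δ : ℝ} (hH : IsDeltaHyperbolic X δ) {x y z t : X} {c : ℝ}
    (h1 : c + δ ≤ gromov x y t) (h2 : c + δ ≤ gromov y z t) : c ≤ gromov x z t := by
  have := hH x y z t
  have := le_min h1 h2
  linarith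

/-- A short step forward from `γ b` does not backtrack towards an arbitrarily distant earlier
point `γ a`; the induction runs on the number of steps of length `500δ` from `a` to `b`. -/
lemma local_step {δ : ℝ} (hδ : 0 < δ) (hH : IsDeltaHyperbolic X δ) {γ : ℝ → X}
    (hγ : IsLocalQuasiGeodesic (10 ^ 3 * δ) δ γ) (n : ℕ) :
    ∀ a b c : ℝ, a ≤ b → b ≤ c → c ≤ b + 500 * δ → b - a ≤ n * (500 * δ) →
      gromov (γ a) (γ c) (γ b) ≤ 2 * δ := by
  have short : ∀ a b c : ℝ, a ≤ b → b ≤ c → c ≤ b + 500 * δ → b - a ≤ 500 * δ →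
      gromov (γ a) (γ c) (γ b) ≤ δ / 2 := by
    intro a b c hab hbc hc hb
    have e1 : |a - b| = b - a := by rw [abs_sub_comm]; exact abs_of_nonneg (by linarith)
    have e2 : |c - b| = c - b := abs_of_nonneg (by linarith)
    have e3 : |a - c| = c - a := by rw [abs_sub_comm]; exact abs_of_nonneg (by linarith)
    have h1 := (hγ a b (by rw [e1]; linarith)).1
    have h2 := (hγ c b (by rw [e2]; linarith)).1
    have h3 := (hγ a c (by rw [e3]; linarith)).2
    unfold gromov; linarith
  induction n with
  | zero =>
    intro a b c hab hbc hc hb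
    have := short a b c hab hbc hc (by push_cast at hb; linarith)
    linarith
  | succ n ih =>
    intro a b c hab hbc hc hb
    by_cases hs : b - a ≤ 500 * δ
    · have := short a b c hab hbc hc hs
      linarith
    · push Not at hs
      have h1 := ih a (b - 500 * δ) b (by linarith) (by linarith) (by linarith)
        (by push_cast at hb; linarith)
      have h2 := short (b - 500 * δ) b c (by linarith) hbc hc (by linarith)
      have h3 := (hγ (b - 500 * δ) b (by
        rw [abs_sub_comm, abs_of_nonneg (by linarith)]; linarith)).2
      rw [abs_sub_comm, abs_of_nonneg (by linarith)] at h3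
      have h4 := gromov_add (γ a) (γ (b - 500 * δ)) (γ b)
      rw [gromov_symm] at h2 ⊢
      have := hyp_le hH h2 (y := γ a) (by linarith)
      linarith

/-- A local quasi-geodesic line is globally non-backtracking: its points are nearly aligned in
the order of their parameters. -/
lemma local_line {δ : ℝ} (hδ : 0 < δ) (hH : IsDeltaHyperbolic X δ) {γ : ℝ → X}
    (hγ : IsLocalQuasiGeodesic (10 ^ 3 * δ) δ γ) {a b c : ℝ} (hab : a ≤ b) (hbc : b ≤ c) :
    gromov (γ a) (γ c) (γ b) ≤ 3 * δ := by
  have key : ∀ (γ : ℝ → X), IsLocalQuasiGeodesic (10 ^ 3 * δ) δ γ → ∀ a b c : ℝ, a ≤ b → b ≤ c →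
      c ≤ b + 500 * δ → gromov (γ a) (γ c) (γ b) ≤ 2 * δ := by
    intro γ hγ a b c hab hbc hc
    obtain ⟨n, hn⟩ := exists_nat_ge ((b - a) / (500 * δ))
    exact local_step hδ hH hγ n a b c hab hbc hc (by rwa [div_le_iff₀ (by positivity)] at hn)
  by_cases hc : c ≤ b + 500 * δ
  · have := key γ hγ a b c hab hbc hc
    linarith
  · push Not at hc
    have h1 := key γ hγ a b (b + 500 * δ) hab (by linarith) le_rfl
    have hγ' : IsLocalQuasiGeodesic (10 ^ 3 * δ) δ (fun t => γ (-t)) := by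
      intro s t hst
      have e : |-s - -t| = |s - t| := by rw [abs_sub_comm]; congr 1; ring
      have := hγ (-s) (-t) (by rwa [e])
      rwa [e] at this
    -- the same estimate along the reversed line
    have h2 := key _ hγ' (-c) (-(b + 500 * δ)) (-b) (by linarith) (by linarith) (by linarith)
    simp only [neg_neg] at h2
    have h3 := (hγ b (b + 500 * δ) (by
      rw [abs_sub_comm, abs_of_nonneg (by linarith)]; linarith)).2
    rw [abs_sub_comm, abs_of_nonneg (by linarith)] at h3
    have h4 := gromov_add (γ c) (γ b) (γ (b + 500 * δ))
    have := hyp_le hH h1 (y := γ c) (by linarith)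
    linarith

/-- Among three points of a set lying near a line, one is nearly between the other two. -/
lemma line_trichotomy {δ : ℝ} (hδ : 0 < δ) (hH : IsDeltaHyperbolic X δ) {γ : ℝ → X} {Y : Set X}
    (hγ : IsLocalQuasiGeodesic (10 ^ 3 * δ) δ γ)
    (hY : Y ⊆ Metric.cthickening (99 * δ) (Set.range γ))
    {x y z : X} (hx : x ∈ Y) (hy : y ∈ Y) (hz : z ∈ Y) :
    gromov x y z ≤ 303 * δ ∨ gromov x z y ≤ 303 * δ ∨ gromov y z x ≤ 303 * δ := by
  have near : ∀ w ∈ Y, ∃ t : ℝ, dist w (γ t) ≤ 100 * δ := by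
    intro w hw
    have h := Metric.cthickening_subset_thickening' (show (0:ℝ) < 100 * δ by positivity)
      (show 99 * δ < 100 * δ by linarith) _ (hY hw)
    rw [Metric.mem_thickening_iff] at h
    obtain ⟨_, ⟨t, rfl⟩, ht⟩ := h
    exact ⟨t, ht.le⟩
  obtain ⟨a, ha⟩ := near x hx
  obtain ⟨b, hb⟩ := near y hy
  obtain ⟨c, hc⟩ := near z hz
  have tr : ∀ {u v w : X} {r s t : ℝ}, dist u (γ r) ≤ 100 * δ → dist v (γ s) ≤ 100 * δ →
      dist w (γ t) ≤ 100 * δ → r ≤ t → t ≤ s → gromov u v w ≤ 303 * δ := by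
    intro u v w r s t hu hv hw h1 h2
    have e1 := gromov_left u (γ r) v w
    have e2 := gromov_right (γ r) v (γ s) w
    have e3 := gromov_base (γ r) (γ s) w (γ t)
    have e4 := local_line hδ hH hγ h1 h2
    linarith
  rcases le_total a b with h1 | h1 <;> rcases le_total b c with h2 | h2 <;>
    rcases le_total a c with h3 | h3
  · exact Or.inr (Or.inl (tr ha hc hb h1 h2))
  · exact Or.inr (Or.inl (tr ha hc hb h1 h2))
  · exact Or.inl (tr ha hb hc h3 h2)
  · exact Or.inr (Or.inr (by rw [gromov_symm]; exact tr hc hb ha h3 h1))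
  · exact Or.inr (Or.inr (tr hb hc ha h1 h3))
  · exact Or.inl (by rw [gromov_symm]; exact tr hb ha hc h2 h3)
  · exact Or.inr (Or.inl (by rw [gromov_symm]; exact tr hc ha hb h2 h1))
  · exact Or.inr (Or.inl (by rw [gromov_symm]; exact tr hc ha hb h2 h1))

end Metric

/-! ### Reduced words -/

section Words

variable {G X : Type*} [Group G] [MetricSpace X] [MulAction G X]

lemma gromov_smul (hA : IsometricAction G X) (g : G) (x y t : X) :
    gromov (g • x) (g • y) (g • t) = gromov x y t := by
  have h : ∀ a b : X, dist (g • a) (g • b) = dist a b := (hA g).dist_eq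
  simp only [gromov, h]

lemma dist_inv_smul (hA : IsometricAction G X) (g : G) (x : X) :
    dist (g⁻¹ • x) x = dist (g • x) x := by
  have h := (hA g).dist_eq (g⁻¹ • x) x
  simp only [smul_inv_smul] at h
  rw [← h, dist_comm]

lemma IsWordOver.of_append_left {U : Set G} {l l' : List G} (h : IsWordOver U (l ++ l')) :
    IsWordOver U l :=
  ⟨fun a ha => h.1 a (List.mem_append_left _ ha), (List.isChain_append.1 h.2).1⟩

lemma IsWordOver.of_append_right {U : Set G} {l l' : List G} (h : IsWordOver U (l ++ l')) :
    IsWordOver U l' :=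
  ⟨fun a ha => h.1 a (List.mem_append_right _ ha), (List.isChain_append.1 h.2).2.1⟩

/-- If two reduced words `c a v` and `c a' v'` diverge after `c`, then `(a v)⁻¹ a' v'`
is a reduced word. -/
lemma IsWordOver.diverge {U : Set G} {c v v' : List G} {a a' : G} (haa : a ≠ a')
    (h : IsWordOver U (c ++ a :: v)) (h' : IsWordOver U (c ++ a' :: v')) :
    IsWordOver U (((a :: v).map (·⁻¹)).reverse ++ a' :: v') := by
  have h1 := h.of_append_right
  have h2 := h'.of_append_right
  refine ⟨?_, ?_⟩
  · intro x hx
    rcases List.mem_append.1 hx with hx | hx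
    · rw [List.mem_reverse, List.mem_map] at hx
      obtain ⟨y, hy, rfl⟩ := hx
      rcases h1.1 y hy with hy | hy
      · exact Or.inr (by simpa using hy)
      · exact Or.inl hy
    · exact h2.1 x hx
  · refine List.isChain_append.2 ⟨?_, h2.2, ?_⟩
    · rw [List.isChain_reverse, List.isChain_map]
      refine h1.2.imp ?_
      intro x y hxy e
      exact hxy (by simpa using e.symm)
    · intro x hx y hy
      simp at hx hy
      subst hx hy
      simpa using haa.symm

/-- In a reduced set every letter moves `p` by at least `500δ`. -/
lemma letter_large {δ : ℝ} {U : Set G} {p : X} (hR : ReducedAt δ (200 * δ) U p)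
    {a : G} (ha : a ∈ U ∪ U⁻¹) : 500 * δ ≤ dist (a • p) p := by
  have hne : a ≠ a⁻¹ := by
    intro e
    have hU : a ∈ U ∩ U⁻¹ := by
      rcases ha with h | h
      · exact ⟨h, by rw [Set.mem_inv, ← e]; exact h⟩
      · exact ⟨by rw [e]; exact h, h⟩
    rw [hR.1] at hU
    exact hU
  have hi : a⁻¹ ∈ U ∪ U⁻¹ := by
    rcases ha with h | h
    · exact Or.inr (by simpa using h)
    · exact Or.inl h
  have h1 := hR.2 a ha a⁻¹ hi hne
  have h2 := gromov_nonneg (a • p) (a⁻¹ • p) p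
  have h3 := min_le_left (dist (a • p) p) (dist (a⁻¹ • p) p)
  linarith

lemma two_letter {δ : ℝ} {U : Set G} {p : X} (hA : IsometricAction G X)
    (hR : ReducedAt δ (200 * δ) U p) {a b : G} (ha : a ∈ U ∪ U⁻¹) (hb : b ∈ U ∪ U⁻¹)
    (hab : b ≠ a⁻¹) :
    gromov p ((a * b) • p) (a • p) ≤ min (dist (a • p) p) (dist (b • p) p) / 2 - 250 * δ := by
  have hi : a⁻¹ ∈ U ∪ U⁻¹ := by
    rcases ha with h | h
    · exact Or.inr (by simpa using h)
    · exact Or.inl h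
  have h := hR.2 a⁻¹ hi b hb hab.symm
  rw [← gromov_smul hA a, smul_inv_smul, ← mul_smul, dist_inv_smul hA] at h
  linarith

/-- The broken geodesic through the vertices of a reduced word does not backtrack at its
penultimate vertex. -/
lemma no_backtrack_last {δ : ℝ} (hδ : 0 < δ) (hH : IsDeltaHyperbolic X δ) {U : Set G} {p : X}
    (hA : IsometricAction G X) (hR : ReducedAt δ (200 * δ) U p) (l : List G) :
    ∀ a b : G, IsWordOver U (l ++ [a, b]) →
      gromov p ((l ++ [a, b]).prod • p) ((l ++ [a]).prod • p) ≤
        min (dist (a • p) p) (dist (b • p) p) / 2 - 249 * δ := by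
  induction l using List.reverseRecOn with
  | nil =>
    intro a b h
    have := two_letter hA hR (h.1 a (by simp)) (h.1 b (by simp))
      (List.isChain_cons_cons.1 h.2).1
    simp only [List.nil_append, List.prod_cons, List.prod_nil, mul_one] at this ⊢
    linarith
  | append_singleton l x ih =>
    intro a b h
    have e1 : l ++ [x] ++ [a, b] = (l ++ [x, a]) ++ [b] := by simp
    have h1 := ih x a (by rw [e1] at h; exact h.of_append_left)
    have hab := h.of_append_right
    have h2 := two_letter hA hR (hab.1 a (by simp)) (hab.1 b (by simp))
      (List.isChain_cons_cons.1 hab.2).1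
    set g := (l ++ [x]).prod with hg
    have e2 : (l ++ [x, a]).prod = g * a := by simp [hg, mul_assoc]
    have e3 : (l ++ [x] ++ [a, b]).prod = g * (a * b) := by
      rw [List.prod_append, ← hg]; simp
    have e4 : (l ++ [x] ++ [a]).prod = g * a := by rw [List.prod_append, ← hg]; simp
    rw [e3, e4]
    rw [e2] at h1
    rw [← gromov_smul hA g, ← mul_smul, ← mul_smul] at h2
    have h3 := gromov_add p (g • p) ((g * a) • p)
    have h4 : dist (g • p) ((g * a) • p) = dist (a • p) p := by
      rw [mul_smul, dist_comm, (hA g).dist_eq]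
    have m1 := min_le_right (dist (x • p) p) (dist (a • p) p)
    have m2 := min_le_left (dist (a • p) p) (dist (b • p) p)
    rw [gromov_symm] at h2 ⊢
    have := hyp_le hH (y := p) h2 (by linarith)
    linarith

lemma no_backtrack_last' {δ : ℝ} (hδ : 0 < δ) (hH : IsDeltaHyperbolic X δ) {U : Set G} {p : X}
    (hA : IsometricAction G X) (hR : ReducedAt δ (200 * δ) U p) {l : List G} {b : G}
    (hl : l ≠ []) (h : IsWordOver U (l ++ [b])) :
    gromov p ((l ++ [b]).prod • p) (l.prod • p) ≤ dist (b • p) p / 2 - 249 * δ := by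
  obtain ⟨l, a, rfl⟩ := List.eq_nil_or_concat l |>.resolve_left hl
  rw [List.concat_eq_append, List.append_assoc] at *
  have h1 := no_backtrack_last hδ hH hA hR l a b h
  have m := min_le_right (dist (a • p) p) (dist (b • p) p)
  exact h1.trans (by linarith)

/-- Looking from the first vertex `p`, the last vertex of a reduced word is seen past the
second vertex `a • p`. -/
lemma no_backtrack_first {δ : ℝ} (hδ : 0 < δ) (hH : IsDeltaHyperbolic X δ) {U : Set G} {p : X}
    (hA : IsometricAction G X) (hR : ReducedAt δ (200 * δ) U p) (l : List G) :
    ∀ a : G, IsWordOver U (a :: l) →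
      dist (a • p) p / 2 + 249 * δ ≤ gromov (a • p) ((a :: l).prod • p) p := by
  induction l with
  | nil =>
    intro a h
    have := letter_large hR (h.1 a (by simp))
    simp [gromov]
    linarith
  | cons b l ih =>
    intro a h
    have hw : IsWordOver U ([a] ++ (b :: l)) := h
    have h1 := ih b hw.of_append_right
    have h2 := two_letter hA hR (h.1 a (by simp)) (h.1 b (by simp))
      (List.isChain_cons_cons.1 h.2).1
    rw [← gromov_smul hA a, ← mul_smul, ← mul_smul, gromov_symm] at h1
    have h3 := gromov_add ((a :: b :: l).prod • p) p (a • p)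
    rw [dist_comm] at h3
    have m1 := min_le_left (dist (a • p) p) (dist (b • p) p)
    have m2 := min_le_right (dist (a • p) p) (dist (b • p) p)
    have e : (a :: b :: l).prod = a * (b :: l).prod := List.prod_cons
    rw [← e] at h1
    have := hyp_le hH h2 (y := (a :: b :: l).prod • p) (by linarith)
    rw [gromov_symm] at this
    rw [gromov_symm]
    linarith

/-- Reduced words make linear progress. -/
lemma word_dist {δ : ℝ} (hδ : 0 < δ) (hH : IsDeltaHyperbolic X δ) {U : Set G} {p : X}
    (hA : IsometricAction G X) (hR : ReducedAt δ (200 * δ) U p) (a : G) (l : List G) :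
    ∀ b : G, IsWordOver U (a :: l ++ [b]) →
      dist (a • p) p / 2 + dist (b • p) p / 2 + 498 * δ * (l.length + 1) ≤
        dist p ((a :: l ++ [b]).prod • p) := by
  have step : ∀ (l : List G) (x b : G), IsWordOver U (l ++ [x, b]) →
      dist p ((l ++ [x]).prod • p) + dist (b • p) p / 2 - dist (x • p) p / 2 + 498 * δ ≤
        dist p ((l ++ [x, b]).prod • p) := by
    intro l x b h
    have h1 := no_backtrack_last hδ hH hA hR l x b h
    have e : dist ((l ++ [x, b]).prod • p) ((l ++ [x]).prod • p) = dist (b • p) p := by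
      have e' : (l ++ [x, b]).prod = (l ++ [x]).prod * b := by simp [mul_assoc]
      rw [e', mul_smul, (hA _).dist_eq]
    have m1 := min_le_left (dist (x • p) p) (dist (b • p) p)
    have m2 := min_le_right (dist (x • p) p) (dist (b • p) p)
    unfold gromov at h1
    rw [e] at h1
    linarith
  induction l using List.reverseRecOn with
  | nil =>
    intro b h
    have := step [] a b h
    simp only [List.nil_append, List.prod_singleton] at this
    rw [dist_comm p] at this
    simp only [List.length_nil, List.singleton_append, Nat.cast_zero]
    linarith
  | append_singleton l x ih =>
    intro b h
    have e : a :: (l ++ [x]) ++ [b] = (a :: l) ++ [x, b] := by simp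
    rw [e] at h ⊢
    have h1 := step _ x b h
    have h2 := ih x (by
      have : a :: l ++ [x, b] = (a :: l ++ [x]) ++ [b] := by simp
      rw [this] at h; exact h.of_append_left)
    rw [List.length_append]
    push_cast
    simp only [List.length_singleton, Nat.cast_one]
    linarith

lemma word_dist' {δ : ℝ} (hδ : 0 < δ) (hH : IsDeltaHyperbolic X δ) {U : Set G} {p : X}
    (hA : IsometricAction G X) (hR : ReducedAt δ (200 * δ) U p) {l : List G}
    (h : IsWordOver U l) : 498 * δ * l.length ≤ dist p (l.prod • p) := by
  rcases l with _ | ⟨a, l⟩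
  · simp
  · rcases List.eq_nil_or_concat l with rfl | ⟨l, b, rfl⟩
    · have := letter_large hR (h.1 a (by simp))
      rw [dist_comm] at this
      simp
      linarith
    · rw [List.concat_eq_append] at *
      have h1 := word_dist hδ hH hA hR a l b h
      have h2 := letter_large hR (h.1 a (by simp))
      have h3 := letter_large hR (h.1 b (by simp))
      simp only [List.length_cons, List.length_append, List.length_nil]
      push_cast
      rw [← List.cons_append]
      linarith

lemma word_dist_le {U : Set G} {p : X} {L : ℝ} (hA : IsometricAction G X)
    (hL : ∀ a ∈ U ∪ U⁻¹, dist (a • p) p ≤ L) {l : List G} (h : ∀ a ∈ l, a ∈ U ∪ U⁻¹) :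
    dist p (l.prod • p) ≤ L * l.length := by
  induction l with
  | nil => simp
  | cons a l ih =>
    have h1 := ih fun x hx => h x (by simp [hx])
    have h2 := hL a (h a (by simp))
    have h3 := dist_triangle p (a • p) ((a :: l).prod • p)
    rw [List.prod_cons, mul_smul, (hA a).dist_eq, dist_comm p (a • p)] at h3
    simp only [List.prod_cons, List.length_cons, mul_smul]
    push_cast
    linarith

end Words

/-! ### Shortening words -/

section Shortening

variable {G X : Type*} [Group G] [MetricSpace X] [MulAction G X]

/-- An interior vertex `c • p` of a reduced word `c a v` lies near the geodesic joining the
endpoints, up to half of the displacement of `a`. -/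
lemma interior_vertex {δ : ℝ} (hδ : 0 < δ) (hH : IsDeltaHyperbolic X δ) {U : Set G} {p : X}
    (hA : IsometricAction G X) (hR : ReducedAt δ (200 * δ) U p) {c v : List G} {a : G}
    (hc : c ≠ []) (h : IsWordOver U (c ++ a :: v)) :
    gromov p ((c ++ a :: v).prod • p) (c.prod • p) ≤ dist (a • p) p / 2 - 248 * δ := by
  have e : c ++ a :: v = (c ++ [a]) ++ v := by simp
  have h1 := no_backtrack_last' hδ hH hA hR hc (by rw [e] at h; exact h.of_append_left)
  have h2 := no_backtrack_first hδ hH hA hR v a h.of_append_right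
  rw [← gromov_smul hA c.prod, ← mul_smul, ← mul_smul, ← List.prod_append, gromov_symm] at h2
  rw [List.prod_append, List.prod_singleton] at h1
  have := hyp_le hH h1 (y := (c ++ a :: v).prod • p) (by linarith)
  linarith

/-- Two reduced words with the same long prefix `c` that then diverge cannot both end close to
points `y`, `y'` with `y'` nearly between `y` and a point `y₀` close to `p`: seen from the
endpoint of the second word, `p` and the endpoint of the first word lie in the same direction,
more than half of the last letter away. -/
lemma not_between {δ L : ℝ} (hδ : 0 < δ) (hH : IsDeltaHyperbolic X δ) {U : Set G} {p : X}
    (hA : IsometricAction G X) (hR : ReducedAt δ (200 * δ) U p)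
    (hL : ∀ a ∈ U ∪ U⁻¹, dist (a • p) p ≤ L) {M : ℕ}
    (hM : ∀ l, IsWordOver U l → M ≤ l.length → L + 1000 * δ ≤ dist p (l.prod • p))
    {c v v' : List G} {a a' : G} (haa : a ≠ a') (hc : c ≠ []) (hcM : M ≤ c.length)
    (h : IsWordOver U (c ++ a :: v)) (h' : IsWordOver U (c ++ a' :: v')) {y₀ y y' : X}
    (hy₀ : dist p y₀ ≤ L / 2)
    (hy : ∀ b ∈ (c ++ a :: v).getLast?,
      dist ((c ++ a :: v).prod • p) y ≤ dist (b • p) p / 2 - 200 * δ)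
    (hy' : ∀ b ∈ (c ++ a' :: v').getLast?,
      dist ((c ++ a' :: v').prod • p) y' ≤ dist (b • p) p / 2 - 200 * δ)
    (hb : gromov y₀ y y' ≤ 303 * δ) : False := by
  have hr := IsWordOver.diverge haa h h'
  have hpw' := hM _ h' (by rw [List.length_append]; omega)
  obtain ⟨s, b, hs⟩ := (List.eq_nil_or_concat (a :: v)).resolve_left (by simp)
  obtain ⟨s', b', hs'⟩ := (List.eq_nil_or_concat (a' :: v')).resolve_left (by simp)
  rw [List.concat_eq_append] at hs hs'
  rw [hs] at h hy hr
  rw [hs'] at h' hy' hr hpw'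
  have hy := hy b (by simp)
  have hy' := hy' b' (by simp)
  set w := (c ++ (s ++ [b])).prod with hw
  set w' := (c ++ (s' ++ [b'])).prod with hw'
  have hbL := hL b' (h'.1 b' (by simp))
  have er : ((s ++ [b]).map (·⁻¹)).reverse ++ (s' ++ [b']) =
      (b⁻¹ :: ((s.map (·⁻¹)).reverse ++ s')) ++ [b'] := by simp
  -- the reduced word joining the two endpoints
  have hprod : w * (((s ++ [b]).map (·⁻¹)).reverse ++ (s' ++ [b'])).prod = w' := by
    rw [List.prod_append, ← List.prod_inv_reverse, hw, hw']
    simp only [List.prod_append]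
    group
  have hprod' : w * (b⁻¹ :: ((s.map (·⁻¹)).reverse ++ s')).prod = (c ++ s').prod := by
    have : (b⁻¹ :: ((s.map (·⁻¹)).reverse ++ s')) =
        ((s ++ [b]).map (·⁻¹)).reverse ++ s' := by simp
    rw [this, List.prod_append, ← List.prod_inv_reverse, hw]
    simp only [List.prod_append]
    group
  rw [er] at hr hprod
  have d1 := word_dist hδ hH hA hR _ _ _ hr
  have g1 := no_backtrack_last' hδ hH hA hR (by simp) hr
  rw [← (hA w).dist_eq p] at d1
  simp only [← mul_smul] at d1
  rw [hprod, dist_inv_smul hA] at d1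
  have d1' : (0 : ℝ) ≤ 498 * δ * (((s.map (·⁻¹)).reverse ++ s').length + 1) := by positivity
  rw [← gromov_smul hA w, ← mul_smul, ← mul_smul, hprod, hprod'] at g1
  have ew' : c ++ (s' ++ [b']) = (c ++ s') ++ [b'] := by simp
  have g2 := no_backtrack_last' hδ hH hA hR (l := c ++ s') (b := b') (by simp [hc])
    (by rw [ew'] at h'; exact h')
  rw [← ew', ← hw'] at g2
  have dt : dist ((c ++ s').prod • p) (w' • p) = dist (b' • p) p := by
    have e : w' = (c ++ s').prod * b' := by simp [hw', mul_assoc]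
    rw [e, mul_smul, dist_comm, (hA _).dist_eq]
  have a1 := gromov_add p ((c ++ s').prod • p) (w' • p)
  have a2 := gromov_add (w • p) ((c ++ s').prod • p) (w' • p)
  have k1 : dist (b' • p) p / 2 + 248 * δ ≤ gromov p (w • p) (w' • p) := by
    refine hyp_ge hH (y := (c ++ s').prod • p) (by linarith) ?_
    rw [gromov_symm]
    linarith
  have k2 : dist (b' • p) p / 2 + 247 * δ ≤ gromov y₀ (w • p) (w' • p) := by
    refine hyp_ge hH (y := p) ?_ (by linarith)
    rw [gromov_symm]
    have := gromov_ge_sub p y₀ (w' • p)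
    linarith
  have k3 : dist (b' • p) p / 2 + 190 * δ ≤ gromov y₀ y (w' • p) := by
    refine hyp_ge hH (y := w • p) (by linarith) ?_
    have := gromov_ge_sub (w • p) y (w' • p)
    linarith
  have k4 := gromov_base y₀ y (w' • p) y'
  linarith

/-- If a shortening word over `Y` is cut into two long words, the vertex at the cut is close to
`Y`. -/
lemma prefix_near {δ τ L : ℝ} (hδ : 0 < δ) (hH : IsDeltaHyperbolic X δ) {U : Set G} {p : X}
    (hA : IsometricAction G X) (hR : ReducedAt δ (200 * δ) U p)
    (hL : ∀ a ∈ U ∪ U⁻¹, dist (a • p) p ≤ L) {M : ℕ}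
    (hM : ∀ l, IsWordOver U l → M ≤ l.length → L + 1000 * δ ≤ dist p (l.prod • p))
    {c d : List G} (hc : c ≠ []) (hcM : M ≤ c.length) (hd : d ≠ []) (hdM : M ≤ d.length)
    {Y : Set X} (hY : SigmaQuasiConvex (10 * δ) Y) (h : IsShorteningWord δ τ U p Y (c ++ d)) :
    Metric.infDist (c.prod • p) Y < L := by
  obtain ⟨-, hw, y₀, y, hy₀, hy, -, h0, h1⟩ := h
  obtain ⟨a, c', rfl⟩ := List.exists_cons_of_ne_nil hc
  obtain ⟨d', b, rfl⟩ := (List.eq_nil_or_concat d).resolve_left hd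
  rw [List.concat_eq_append] at *
  have h0 := h0 a (by simp)
  have h1 := h1 b (by rw [List.getLast?_append]; simp)
  have ha := hL a (hw.1 a (by simp))
  have hb := hL b (hw.1 b (by simp))
  have hcp := hM _ hw.of_append_left hcM
  have hdp := hM _ hw.of_append_right hdM
  rw [← (hA (a :: c').prod).dist_eq] at hdp
  simp only [← mul_smul] at hdp
  rw [← List.prod_append] at hdp
  have hin : gromov p (((a :: c') ++ (d' ++ [b])).prod • p) ((a :: c').prod • p) ≤
      L / 2 - 248 * δ := by
    obtain ⟨x, t, ht⟩ := List.exists_cons_of_ne_nil hd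
    rw [ht] at hw ⊢
    have := interior_vertex hδ hH hA hR (by simp) hw
    have := hL x (hw.1 x (by simp))
    linarith
  set w := ((a :: c') ++ (d' ++ [b])).prod
  set q := (a :: c').prod • p
  have k1 := gromov_ge_sub p y₀ q
  have k2 := gromov_ge_sub (w • p) y q
  rw [dist_comm] at hdp
  rw [gromov_symm] at hin k1 k2
  have k3 := hyp_le hH hin (y := y₀) (by linarith)
  rw [gromov_symm] at k3
  have k4 := hyp_le hH k3 (y := y) (by linarith)
  have k5 := hY q y₀ hy₀.1 y hy.1
  have := letter_large hR (hw.1 a (by simp))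
  linarith

/-- A set of the family is determined by a long prefix of any of its shortening words (as long as
the rest of the word is long as well). -/
lemma cylinder_unique {δ τ L Δ : ℝ} (hδ : 0 < δ) (hΔ : 0 < Δ)
    (hH : IsDeltaHyperbolic X δ) {U : Set G} {p : X}
    (hA : IsometricAction G X) (hR : ReducedAt δ (200 * δ) U p)
    (hL : ∀ a ∈ U ∪ U⁻¹, dist (a • p) p ≤ L) {M : ℕ}
    (hM : ∀ l, IsWordOver U l → M ≤ l.length → L + 1000 * δ ≤ dist p (l.prod • p))
    {c d d' : List G} (hc : c ≠ []) (hcM : M ≤ c.length) (hd : d ≠ []) (hdM : M ≤ d.length)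
    (hd' : d' ≠ []) (hdM' : M ≤ d'.length) (hcΔ : Δ < dist p (c.prod • p))
    {Y Y' : Set X} (hY : SigmaQuasiConvex (10 * δ) Y) (hY' : SigmaQuasiConvex (10 * δ) Y')
    (h : IsShorteningWord δ τ U p Y (c ++ d)) (h' : IsShorteningWord δ τ U p Y' (c ++ d'))
    (hYY : Y ≠ Y' → EMetric.diam (Metric.cthickening L Y ∩ Metric.cthickening L Y') ≤
      ENNReal.ofReal Δ) : Y = Y' := by
  by_contra hne
  have mem : ∀ {d : List G} {Y : Set X}, d ≠ [] → M ≤ d.length → SigmaQuasiConvex (10 * δ) Y →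
      IsShorteningWord δ τ U p Y (c ++ d) →
      p ∈ Metric.cthickening L Y ∧ c.prod • p ∈ Metric.cthickening L Y := by
    intro d Y hd hdM hY h
    have hn := prefix_near hδ hH hA hR hL hM hc hcM hd hdM hY h
    obtain ⟨-, hw, y₀, y, hy₀, hy, -, h0, h1⟩ := h
    obtain ⟨z, hz, hzd⟩ := (Metric.infDist_lt_iff ⟨y₀, hy₀.1⟩).1 hn
    refine ⟨?_, Metric.mem_cthickening_of_dist_le _ z _ _ hz hzd.le⟩
    obtain ⟨a, c', rfl⟩ := List.exists_cons_of_ne_nil hc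
    have h0 := h0 a (by simp)
    have ha := hL a (hw.1 a (by simp))
    have := dist_nonneg (x := a • p) (y := p)
    exact Metric.mem_cthickening_of_dist_le _ y₀ _ _ hy₀.1 (by linarith)
  have m1 := mem hd hdM hY h
  have m2 := mem hd' hdM' hY' h'
  have hle := (Metric.edist_le_ediam_of_mem (show p ∈ Metric.cthickening L Y ∩
    Metric.cthickening L Y' from ⟨m1.1, m2.1⟩) ⟨m1.2, m2.2⟩).trans (hYY hne)
  rw [edist_dist, ENNReal.ofReal_le_ofReal_iff hΔ.le] at hle
  linarith

lemma exists_diverge {α : Type*} (l : List α) : ∀ l' : List α, l.length = l'.length → l ≠ l' →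
    ∃ (c v v' : List α) (a a' : α), a ≠ a' ∧ l = c ++ a :: v ∧ l' = c ++ a' :: v' := by
  induction l with
  | nil => intro l' h hne; cases l' <;> simp_all
  | cons x l ih =>
    intro l' h hne
    cases l' with
    | nil => simp at h
    | cons x' l' =>
      by_cases hx : x = x'
      · subst hx
        obtain ⟨c, v, v', a, a', h1, h2, h3⟩ := ih l' (by simpa using h) (by simpa using hne)
        exact ⟨x :: c, v, v', a, a', h1, by simp [h2], by simp [h3]⟩
      · exact ⟨[], l, l', x, x', hx, rfl, rfl⟩

/-- A shortening word of given length over `Y` is determined by a long prefix: as `Y` is close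
to a line, of the three points of `Y` attached to two such words one lies between the others,
which is impossible for the endpoints when the words diverge, and for the point near `p` when
they share a long prefix. -/
lemma word_unique {δ τ L : ℝ} (hδ : 0 < δ)
    (hH : IsDeltaHyperbolic X δ) {U : Set G} {p : X}
    (hA : IsometricAction G X) (hR : ReducedAt δ (200 * δ) U p)
    (hL : ∀ a ∈ U ∪ U⁻¹, dist (a • p) p ≤ L) {M : ℕ}
    (hM : ∀ l, IsWordOver U l → M ≤ l.length → L + 1000 * δ ≤ dist p (l.prod • p))
    {c d d' : List G} (hc : c ≠ []) (hcM : M ≤ c.length) (hdd : d.length = d'.length)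
    {Y : Set X} {γ : ℝ → X} (hγ : IsLocalQuasiGeodesic (10 ^ 3 * δ) δ γ)
    (hYγ : Y ⊆ Metric.cthickening (99 * δ) (Set.range γ))
    (h : IsShorteningWord δ τ U p Y (c ++ d)) (h' : IsShorteningWord δ τ U p Y (c ++ d')) :
    d = d' := by
  by_contra hne
  obtain ⟨k, v, v', a, a', haa, rfl, rfl⟩ := exists_diverge d d' hdd hne
  rw [← List.append_assoc] at h h'
  have hc : c ++ k ≠ [] := by simp [hc]
  have hcM : M ≤ (c ++ k).length := by rw [List.length_append]; omega
  generalize c ++ k = c at *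
  obtain ⟨-, hw, y₀, y, hy₀, hy, -, h0, h1⟩ := h
  obtain ⟨-, hw', y₀', y', hy₀', hy', -, h0', h1'⟩ := h'
  have hp0 : dist p y₀ ≤ L / 2 := by
    obtain ⟨x, c', rfl⟩ := List.exists_cons_of_ne_nil hc
    have h0 := h0 x (by simp)
    have ha := hL x (hw.1 x (by simp))
    linarith
  have hwp := hM _ hw (by rw [List.length_append]; omega)
  have hwp' := hM _ hw' (by rw [List.length_append]; omega)
  have hcp := hM _ hw.of_append_left hcM
  have far : ∀ {v : List G} {a : G} {y : X}, IsWordOver U (c ++ a :: v) →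
      (∀ b ∈ (c ++ a :: v).getLast?,
        dist ((c ++ a :: v).prod • p) y ≤ dist (b • p) p / 2 - 200 * δ) →
      L / 2 + 900 * δ ≤ gromov (c.prod • p) y p := by
    intro v a y hw h1
    have hwp := hM _ hw (by rw [List.length_append]; omega)
    have i1 := interior_vertex hδ hH hA hR hc hw
    have i2 := gromov_add ((c ++ a :: v).prod • p) p (c.prod • p)
    have i3 := hL a (hw.1 a (by simp))
    rw [gromov_symm] at i1
    have i4 := gromov_ge_sub ((c ++ a :: v).prod • p) y p
    have i5 : dist ((c ++ a :: v).prod • p) y ≤ L / 2 - 200 * δ := by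
      obtain ⟨s, b, hs⟩ := (List.eq_nil_or_concat (c ++ a :: v)).resolve_left (by simp)
      rw [List.concat_eq_append] at hs
      have := h1 b (by rw [hs]; simp)
      have := hL b (hw.1 b (by rw [hs]; simp))
      linarith
    rw [dist_comm] at hwp
    refine hyp_ge hH (y := (c ++ a :: v).prod • p) ?_ (by linarith)
    rw [gromov_symm]
    linarith
  have f1 := far hw h1
  have f2 := far hw' h1'
  rcases line_trichotomy hδ hH hγ hYγ hy₀.1 hy.1 hy'.1 with ht | ht | ht
  · exact not_between hδ hH hA hR hL hM haa hc hcM hw hw' hp0 h1 h1' ht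
  · exact not_between hδ hH hA hR hL hM haa.symm hc hcM hw' hw hp0 h1' h1 ht
  · rw [gromov_symm] at f1
    have := hyp_ge hH (x := y) (y := c.prod • p) (z := y') (t := p) (c := L / 2 + 800 * δ)
      (by linarith) (by linarith)
    have := gromov_base y y' p y₀
    linarith

end Shortening

/-! ### Counting shortening-free words -/

section Counting

/-- The recursive inequality for the number `f n` of shortening-free words of length at most `n`
forces growth by a factor `k` at each step: the words of length `2M + 2 + j` to be avoided
contribute at most `f n / 2 ^ (j + 1)`. -/
lemma growth_of_recursion {k M : ℕ} (hk : 2 ≤ k) {f : ℕ → ℕ}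
    (hrec : ∀ n, 2 * k * f n ≤ f n + (f (n + 1) +
      ∑ j ∈ Finset.range (n - 2 * M), f (n - 2 * M - 1 - j) * (2 * k) ^ M)) (n : ℕ) :
    k * f n ≤ f (n + 1) := by
  induction n using Nat.strong_induction_on with
  | _ n ih =>
    have iter : ∀ j i, i + j ≤ n → f i * k ^ j ≤ f (i + j) := by
      intro j
      induction j with
      | zero => intro i _; simp
      | succ j ihj =>
        intro i hij
        calc f i * k ^ (j + 1) = k * (f i * k ^ j) := by ring
          _ ≤ k * f (i + j) := Nat.mul_le_mul_left _ (ihj i (by omega))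
          _ ≤ f (i + j + 1) := ih _ (by omega)
    have term : ∀ j ∈ Finset.range (n - 2 * M),
        ((f (n - 2 * M - 1 - j) * (2 * k) ^ M : ℕ) : ℝ) ≤ f n * (1 / 2) ^ (j + 1) := by
      intro j hj
      rw [Finset.mem_range] at hj
      have h1 := iter (2 * M + (j + 1)) (n - 2 * M - 1 - j) (by omega)
      rw [show n - 2 * M - 1 - j + (2 * M + (j + 1)) = n by omega] at h1
      have h2 : f (n - 2 * M - 1 - j) * (2 * k) ^ M * 2 ^ (j + 1) ≤ f n := by
        refine le_trans ?_ h1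
        rw [pow_add k (2 * M), ← mul_assoc]
        refine Nat.mul_le_mul (Nat.mul_le_mul_left _ ?_) (Nat.pow_le_pow_left hk _)
        rw [pow_mul]
        exact Nat.pow_le_pow_left (by nlinarith) _
      have h3 : ((f (n - 2 * M - 1 - j) * (2 * k) ^ M : ℕ) : ℝ) * 2 ^ (j + 1) ≤ f n := by
        exact_mod_cast h2
      rw [one_div, inv_pow, ← div_eq_mul_inv, le_div_iff₀ (by positivity)]
      exact h3
    have geom : ∀ J : ℕ, ∑ j ∈ Finset.range J, (1 / 2 : ℝ) ^ (j + 1) = 1 - (1 / 2) ^ J := by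
      intro J
      induction J with
      | zero => simp
      | succ J ihJ => rw [Finset.sum_range_succ, ihJ]; ring
    have hsum := Finset.sum_le_sum term
    rw [← Finset.mul_sum, geom] at hsum
    have hr : (2 * k * f n : ℝ) ≤ f n + (f (n + 1) +
        ∑ j ∈ Finset.range (n - 2 * M), ((f (n - 2 * M - 1 - j) * (2 * k) ^ M : ℕ) : ℝ)) := by
      exact_mod_cast hrec n
    have hp : (0 : ℝ) ≤ f n * (1 / 2) ^ (n - 2 * M) := by positivity
    have hk' : (2 : ℝ) ≤ k := by exact_mod_cast hk
    have hf : (0 : ℝ) ≤ f n := by positivity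
    have : (k * f n : ℝ) ≤ f (n + 1) := by nlinarith
    exact_mod_cast this

lemma lists_of_length {α : Type*} (A : Finset α) (n : ℕ) :
    ∃ S : Finset (List α), (∀ l, l ∈ S ↔ l.length = n ∧ ∀ a ∈ l, a ∈ A) ∧
      S.card ≤ A.card ^ n := by
  classical
  induction n with
  | zero =>
    refine ⟨{[]}, ?_, by simp⟩
    intro l
    rw [Finset.mem_singleton, List.length_eq_zero_iff]
    constructor
    · rintro rfl; simp
    · exact fun h => h.1
  | succ n ih =>
    obtain ⟨S, hS, hc⟩ := ih
    refine ⟨(A ×ˢ S).image fun q => q.1 :: q.2, ?_, ?_⟩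
    · intro l
      simp only [Finset.mem_image, Finset.mem_product, Prod.exists, hS]
      constructor
      · rintro ⟨a, l, ⟨ha, hl, hA⟩, rfl⟩
        simp [hl, ha]
        exact hA
      · rintro ⟨hl, hA⟩
        cases l with
        | nil => simp at hl
        | cons a l =>
          exact ⟨a, l, ⟨hA a (by simp), by simpa using hl, fun x hx => hA x (by simp [hx])⟩, rfl⟩
    · refine Finset.card_image_le.trans ?_
      rw [Finset.card_product, pow_succ, mul_comm]
      exact Nat.mul_le_mul_right _ hc

variable {G X : Type*} [Group G] [MetricSpace X] [MulAction G X]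

lemma ShorteningFreeWord.of_append_left {δ τ : ℝ} {U : Set G} {p : X} {Ys : Set (Set X)}
    {l l' : List G} (h : ShorteningFreeWord δ τ U p Ys (l ++ l')) :
    ShorteningFreeWord δ τ U p Ys l :=
  ⟨h.1.of_append_left, fun Y hY l₀ l₁ l₂ e => h.2 Y hY l₀ l₁ (l₂ ++ l') (by simp [e])⟩

/-- A one-letter extension of a shortening-free word either is shortening-free, or ends with a
shortening word preceded by a shortening-free word. -/
lemma extension_cases {δ τ : ℝ} {U : Set G} {p : X} {Ys : Set (Set X)} {l : List G} {u : G}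
    (hl : ShorteningFreeWord δ τ U p Ys l) (hw : IsWordOver U (l ++ [u])) :
    ShorteningFreeWord δ τ U p Ys (l ++ [u]) ∨
      ∃ l₀ l₁, l ++ [u] = l₀ ++ l₁ ∧ ShorteningFreeWord δ τ U p Ys l₀ ∧
        ∃ Y ∈ Ys, IsShorteningWord δ τ U p Y l₁ := by
  by_contra! hcon
  obtain ⟨h1, h2⟩ := hcon
  refine h1 ⟨hw, ?_⟩
  intro Y hY l₀ l₁ l₂ e hs
  rcases List.eq_nil_or_concat l₂ with rfl | ⟨l₂, x, rfl⟩
  · rw [List.append_nil] at e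
    obtain ⟨l₁', x, rfl⟩ := (List.eq_nil_or_concat l₁).resolve_left hs.1
    rw [List.concat_eq_append] at *
    refine h2 l₀ _ e ?_ Y hY hs
    rw [← List.append_assoc] at e
    have := (List.append_inj' e rfl).1
    rw [this] at hl
    exact hl.of_append_left
  · rw [List.concat_eq_append, ← List.append_assoc] at e
    exact hl.2 Y hY l₀ l₁ l₂ (List.append_inj' e rfl).1 hs

/-- The counting argument: it only uses that shortening words are long and that a shortening
word of given length is determined by its prefix of length `M`. -/
lemma count_shortening_free {δ τ : ℝ} {U : Set G} {p : X} {Ys : Set (Set X)} {M : ℕ}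
    (hU : U.Finite) (hk : 2 ≤ U.ncard) (hUU : U ∩ U⁻¹ = ∅)
    (hlong : ∀ Y ∈ Ys, ∀ l, IsShorteningWord δ τ U p Y l → 2 * M + 2 ≤ l.length)
    (huniq : ∀ Y ∈ Ys, ∀ Y' ∈ Ys, ∀ l l', IsShorteningWord δ τ U p Y l →
      IsShorteningWord δ τ U p Y' l' → l.length = l'.length → l.take M = l'.take M → l = l')
    (n : ℕ) :
    U.ncard * {l : List G | ShorteningFreeWord δ τ U p Ys l ∧ l.length ≤ n}.ncard ≤
      {l : List G | ShorteningFreeWord δ τ U p Ys l ∧ l.length ≤ n + 1}.ncard := by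
  classical
  have hfinA : (U ∪ U⁻¹).Finite := hU.union hU.inv
  set A := hfinA.toFinset with hA
  have memA : ∀ a, a ∈ A ↔ a ∈ U ∪ U⁻¹ := fun a => by simp [hA]
  have cardA : A.card = 2 * U.ncard := by
    rw [hA, ← Set.ncard_eq_toFinset_card _ hfinA, Set.ncard_union_eq
      (Set.disjoint_iff_inter_eq_empty.2 hUU) hU hU.inv, Set.ncard_inv]
    ring
  choose W hW hWcard using lists_of_length A
  set F : ℕ → Finset (List G) := fun n =>
    ((Finset.range (n + 1)).biUnion W).filter fun l => ShorteningFreeWord δ τ U p Ys l with hF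
  have memF : ∀ n l, l ∈ F n ↔ ShorteningFreeWord δ τ U p Ys l ∧ l.length ≤ n := by
    intro n l
    simp only [hF, Finset.mem_filter, Finset.mem_biUnion, Finset.mem_range, hW]
    constructor
    · rintro ⟨⟨i, hi, hl, -⟩, h⟩
      exact ⟨h, by omega⟩
    · rintro ⟨h, hl⟩
      exact ⟨⟨l.length, by omega, rfl, fun a ha => (memA a).2 (h.1.1 a ha)⟩, h⟩
  have cardF : ∀ n, {l : List G | ShorteningFreeWord δ τ U p Ys l ∧ l.length ≤ n}.ncard =
      (F n).card := by
    intro n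
    rw [← Set.ncard_coe_finset]
    congr 1
    ext l
    simp [memF]
  set S : ℕ → Finset (List G) := fun m =>
    (W m).filter fun l => ∃ Y ∈ Ys, IsShorteningWord δ τ U p Y l with hS
  have memS : ∀ m l, l ∈ S m ↔ l.length = m ∧ ∃ Y ∈ Ys, IsShorteningWord δ τ U p Y l := by
    intro m l
    simp only [hS, Finset.mem_filter, hW]
    constructor
    · rintro ⟨⟨h1, -⟩, h2⟩; exact ⟨h1, h2⟩
    · rintro ⟨h1, h2⟩
      obtain ⟨Y, hY, h⟩ := h2
      exact ⟨⟨h1, fun a ha => (memA a).2 (h.2.1.1 a ha)⟩, Y, hY, h⟩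
  have cardS : ∀ m, M ≤ m → (S m).card ≤ (2 * U.ncard) ^ M := by
    intro m hm
    rw [← cardA]
    refine le_trans (Finset.card_le_card_of_injOn (fun l => l.take M) ?_ ?_) (hWcard M)
    · intro l hl
      obtain ⟨h1, Y, hY, h⟩ := (memS m l).1 hl
      refine (hW M _).2 ⟨by simp [h1, hm], fun a ha => (memA a).2 ?_⟩
      exact h.2.1.1 a (List.mem_of_mem_take ha)
    · intro l hl l' hl' e
      obtain ⟨h1, Y, hY, h⟩ := (memS m l).1 hl
      obtain ⟨h1', Y', hY', h'⟩ := (memS m l').1 hl'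
      exact huniq Y hY Y' hY' l l' h h' (h1.trans h1'.symm) e
  rw [cardF, cardF]
  refine growth_of_recursion (M := M) (f := fun n => (F n).card) hk (fun n => ?_) n
  -- pairs (word, next letter), split according to whether the letter cancels the last one
  set P := F n ×ˢ A
  have hPc : P.card = 2 * U.ncard * (F n).card := by
    rw [Finset.card_product, cardA, mul_comm]
  have hD : (P.filter fun q => q.1.getLast? = some q.2⁻¹).card ≤ (F n).card := by
    refine Finset.card_le_card_of_injOn Prod.fst ?_ ?_
    · intro q hq
      exact (Finset.mem_product.1 (Finset.mem_filter.1 hq).1).1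
    · rintro ⟨l, u⟩ hq ⟨l', u'⟩ hq' e
      have h1 := (Finset.mem_filter.1 hq).2
      have h2 := (Finset.mem_filter.1 hq').2
      simp only at e h1 h2
      subst e
      rw [h1] at h2
      simpa using h2
  have hE : (P.filter fun q => ¬ q.1.getLast? = some q.2⁻¹).card ≤ (F (n + 1)).card +
      ∑ j ∈ Finset.range (n - 2 * M), (F (n - 2 * M - 1 - j)).card * (2 * U.ncard) ^ M := by
    have hB : (P.filter fun q => ¬ q.1.getLast? = some q.2⁻¹).card ≤
        (F (n + 1) ∪ (Finset.range (n - 2 * M)).biUnion fun j =>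
          (F (n - 2 * M - 1 - j) ×ˢ S (2 * M + 2 + j)).image fun q => q.1 ++ q.2).card := by
      refine Finset.card_le_card_of_injOn (fun q => q.1 ++ [q.2]) ?_ ?_
      · rintro ⟨l, u⟩ hq
        obtain ⟨hq, hlast⟩ := Finset.mem_filter.1 hq
        obtain ⟨hl, hu⟩ := Finset.mem_product.1 hq
        obtain ⟨hl, hln⟩ := (memF n l).1 hl
        have hw : IsWordOver U (l ++ [u]) := by
          refine ⟨?_, List.isChain_append.2 ⟨hl.1.2, by simp, ?_⟩⟩
          · intro a ha
            rcases List.mem_append.1 ha with ha | ha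
            · exact hl.1.1 a ha
            · rw [List.mem_singleton.1 ha]; exact (memA u).1 hu
          · intro x hx y hy e
            simp at hy
            subst hy
            refine hlast ?_
            simp only [e, inv_inv]
            exact hx
        rw [Finset.mem_coe, Finset.mem_union]
        rcases extension_cases hl hw with h | ⟨l₀, l₁, e, h0, Y, hY, h1⟩
        · exact Or.inl ((memF _ _).2 ⟨h, by simpa using hln⟩)
        · right
          have hlen := hlong Y hY l₁ h1
          have e' := congrArg List.length e
          simp only [List.length_append, List.length_singleton] at e'
          rw [Finset.mem_biUnion]
          refine ⟨l₁.length - (2 * M + 2), Finset.mem_range.2 (by omega), ?_⟩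
          refine Finset.mem_image.2 ⟨(l₀, l₁), Finset.mem_product.2
            ⟨(memF _ _).2 ⟨h0, ?_⟩, (memS _ _).2 ⟨?_, Y, hY, h1⟩⟩, e.symm⟩
          · simp only; omega
          · simp only; omega
      · rintro ⟨l, u⟩ _ ⟨l', u'⟩ _ e
        have := List.append_inj' e rfl
        simp at this
        simp [this]
    refine hB.trans ((Finset.card_union_le _ _).trans (Nat.add_le_add_left ?_ _))
    refine Finset.card_biUnion_le.trans (Finset.sum_le_sum fun j _ => ?_)
    refine Finset.card_image_le.trans ?_
    rw [Finset.card_product]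
    exact Nat.mul_le_mul_left _ (cardS _ (by omega))
  have := Finset.card_filter_add_card_filter_not (s := P) (fun q => q.1.getLast? = some q.2⁻¹)
  omega

end Counting

/-! ### Growth of shortening-free words -/

/-- growth of shortening-free words. -/
theorem growth_shortening_free :
    ∀ δ L₀ Δ₀ : ℝ, 0 < δ → 0 < L₀ → 0 < Δ₀ →
    ∃ τ₁ : ℝ, 0 < τ₁ ∧
      ∀ (G : Type u) [Group G] (X : Type v) [MetricSpace X] [MulAction G X],
        IsDeltaHyperbolic X δ → IsGeodesicSpace X → IsometricAction G X →
        ∀ (p : X) (U : Set G), U.Finite → 2 ≤ U.ncard →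
          ReducedAt δ (200 * δ) U p →
          0 < energyAt U p → energyAt U p ≤ L₀ →
        ∀ Ys : Set (Set X),
          (∀ Y ∈ Ys, SigmaQuasiConvex (10 * δ) Y) →
          (∀ Y ∈ Ys, ∃ γ : ℝ → X, IsLocalQuasiGeodesic (10 ^ 3 * δ) δ γ ∧
            Set.range γ ⊆ Y ∧ Y ⊆ Metric.cthickening (99 * δ) (Set.range γ)) →
          (∀ Y₁ ∈ Ys, ∀ Y₂ ∈ Ys, Y₁ ≠ Y₂ →
            EMetric.diam (Metric.cthickening L₀ Y₁ ∩ Metric.cthickening L₀ Y₂) ≤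
              ENNReal.ofReal Δ₀) →
        ∀ τ : ℝ, τ₁ ≤ τ →
        ∀ n : ℕ,
          (U.ncard : ℝ) *
              ({l : List G | ShorteningFreeWord δ τ U p Ys l ∧ l.length ≤ n}.ncard : ℝ) ≤
            ({l : List G | ShorteningFreeWord δ τ U p Ys l ∧ l.length ≤ n + 1}.ncard : ℝ) ∧
          (U.ncard : ℝ) ^ n ≤
            ({l : List G | ShorteningFreeWord δ τ U p Ys l ∧ l.length ≤ n}.ncard : ℝ) := by
  intro δ L₀ Δ₀ hδ hL₀ hΔ₀
  -- reduced words of length at least `M` displace `p` by more than `Δ₀ + L₀ + 1000δ`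
  obtain ⟨M, hMgt⟩ := exists_nat_gt ((Δ₀ + L₀ + 1000 * δ) / (498 * δ))
  rw [div_lt_iff₀ (by positivity)] at hMgt
  have hM0 : 1 ≤ M := by
    rcases Nat.eq_zero_or_pos M with rfl | h
    · rw [Nat.cast_zero, zero_mul] at hMgt
      linarith
    · exact h
  refine ⟨L₀ * (2 * M + 3), by positivity, ?_⟩
  intro G _ X _ _ hH _ hA p U hU hk hR _ hE Ys hqc hline hsep τ hτ
  have hL : ∀ a ∈ U ∪ U⁻¹, dist (a • p) p ≤ L₀ := by
    have hLU : ∀ a ∈ U, dist (a • p) p ≤ L₀ := fun a ha =>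
      (le_csSup (hU.image _).bddAbove (Set.mem_image_of_mem _ ha)).trans hE
    rintro a (ha | ha)
    · exact hLU a ha
    · rw [← dist_inv_smul hA]
      exact hLU _ ha
  have hMd : ∀ l, IsWordOver U l → M ≤ l.length →
      Δ₀ + L₀ + 1000 * δ < dist p (l.prod • p) := by
    intro l hl hlen
    have h1 := word_dist' hδ hH hA hR hl
    have h2 : (M : ℝ) ≤ l.length := by exact_mod_cast hlen
    have h3 : 498 * δ * M ≤ 498 * δ * l.length := by gcongr
    linarith
  have hM : ∀ l, IsWordOver U l → M ≤ l.length → L₀ + 1000 * δ ≤ dist p (l.prod • p) :=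
    fun l hl hlen => by linarith [hMd l hl hlen]
  have hlong : ∀ Y ∈ Ys, ∀ l, IsShorteningWord δ τ U p Y l → 2 * M + 2 ≤ l.length := by
    rintro Y - l ⟨hne, hw, y₀, y₁, -, -, hd, h0, h1⟩
    have k0 := h0 _ (List.head?_eq_some_head hne)
    have k1 := h1 _ (List.getLast?_eq_some_getLast hne)
    have a0 := hL _ (hw.1 _ (List.head_mem hne))
    have a1 := hL _ (hw.1 _ (List.getLast_mem hne))
    have k2 := word_dist_le hA hL hw.1
    have t1 := dist_triangle y₀ p y₁
    have t2 := dist_triangle p (l.prod • p) y₁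
    rw [dist_comm y₀ p] at t1
    have k3 : L₀ * (2 * M + 3) < L₀ * (l.length + 1) := by linarith
    have k4 := lt_of_mul_lt_mul_left k3 hL₀.le
    have k5 : 2 * M + 3 < l.length + 1 := by exact_mod_cast k4
    omega
  have huniq : ∀ Y ∈ Ys, ∀ Y' ∈ Ys, ∀ l l', IsShorteningWord δ τ U p Y l →
      IsShorteningWord δ τ U p Y' l' → l.length = l'.length →
      l.take M = l'.take M → l = l' := by
    intro Y hY Y' hY' l l' h h' hlen htake
    have n1 := hlong Y hY l h
    have c1 : (l.take M).length = M := by rw [List.length_take]; omega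
    have d1 : (l.drop M).length = l.length - M := List.length_drop
    have d2 : (l'.drop M).length = l'.length - M := List.length_drop
    have hc : l.take M ≠ [] := List.ne_nil_of_length_pos (by omega)
    have hd : l.drop M ≠ [] := List.ne_nil_of_length_pos (by omega)
    have hd' : l'.drop M ≠ [] := List.ne_nil_of_length_pos (by omega)
    rw [← List.take_append_drop M l] at h
    rw [← List.take_append_drop M l', ← htake] at h'
    have hcd := hMd _ h.2.1.of_append_left c1.ge
    have hYY := cylinder_unique hδ hΔ₀ hH hA hR hL hM hc c1.ge hd (by omega) hd' (by omega)
      (by linarith) (hqc Y hY) (hqc Y' hY') h h' (hsep Y hY Y' hY')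
    subst hYY
    obtain ⟨γ, hγ, -, hYγ⟩ := hline Y hY
    have hdd := word_unique hδ hH hA hR hL hM hc c1.ge (by omega) hγ hYγ h h'
    rw [← List.take_append_drop M l, ← List.take_append_drop M l', htake, hdd]
  have hgrow := count_shortening_free hU hk hR.1 hlong huniq
  intro n
  refine ⟨by exact_mod_cast hgrow n, ?_⟩
  have hpow : U.ncard ^ n ≤
      {l : List G | ShorteningFreeWord δ τ U p Ys l ∧ l.length ≤ n}.ncard := by
    induction n with
    | zero =>
      have hnil : {l : List G | ShorteningFreeWord δ τ U p Ys l ∧ l.length ≤ 0} = {[]} := by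
        ext l
        simp only [Set.mem_ofPred_eq, Set.mem_singleton_iff, Nat.le_zero, List.length_eq_zero_iff]
        refine ⟨fun h => h.2, ?_⟩
        rintro rfl
        refine ⟨⟨⟨by simp, List.isChain_nil⟩, ?_⟩, rfl⟩
        intro Y _ l₀ l₁ l₂ e hs
        have e' := congrArg List.length e
        simp only [List.length_nil, List.length_append] at e'
        exact hs.1 (List.length_eq_zero_iff.1 (by omega))
      rw [hnil, Set.ncard_singleton, pow_zero]
    | succ n ih =>
      rw [pow_succ, mul_comm]
      exact (Nat.mul_le_mul_left _ ih).trans (hgrow n)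
  exact_mod_cast hpow
end
end

section
/- There exist a finitely generated group G, real numbers δ > 0, κ ≥ δ and N > 0, a δ-hyperbolic geodesic metric space X, and a (κ,N)-acylindrical action of G on X by isometries, such that: (a) the action is non-elementary, i.e. some G-orbit in X is unbounded and G is not virtually cyclic; (b) G has uniform exponential growth, i.e. there is ξ > 0 such that ω(U) ≥ ξ for every finite symmetric generating set U of G; and (c) G does not have the short loxodromic property: for every natural number n ≥ 1 there is a finite symmetric generating set U of G such that U^n contains no element that is loxodromic for the action of G on X. -/
/-!
The group is the free group `F` on `a, b`. Let `phi` be the Fibonacci automorphism `a ↦ ab`,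
`b ↦ a`, let `wd` be the word metric and let `dn n x y = wd (phi ^ n x) (phi ^ n y)`, again the
metric of a Cayley tree of `F`. The preimage `genSet n` of `{a, b, a⁻¹, b⁻¹}` under `phi ^ n` is a
symmetric generating set, and its `n`-th power consists of elements `g` with `dn n 1 g ≤ n`. It is
therefore enough to find one action in which all such elements, for all `n`, have bounded orbits,
and which is nevertheless acylindrical and non-elementary.

Call `x, y` a *piece* if both lie on a segment `[x', y']` of the Cayley tree such that, for some
level `n`, a nontrivial `w` moves `x'` and `y'` by at most `Mn n` for `dn n`, where `Mn n` is
comparable to the `n`-th Fibonacci number. Let `Dp x y` be the least length of a chain of pieces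
from `x` to `y`. Subsegments of pieces are pieces, so `Dp` is additive up to an error `1` along
segments of the Cayley tree (`Dp_additive`); hence `Dp` is hyperbolic (`Dp_four`). If
`dn n 1 g ≤ n ≤ Mn n` then all the powers of `g` form pieces with `1`, with `w = g`
(`Dp_pow_le`), so `g` is not loxodromic.

* Acylindricity (`acyl_of_key`). Suppose `x, y` are far apart for `Dp`. The elements moving both by
  at most `R` shift the middle of the tree segment `[x, y]` along itself, by pairwise distinct
  amounts. If there are too many of them, two have a quotient `g ≠ 1` whose `40` first steps on
  `[x, y]` form a piece, while further powers of `g` still travel far in `Dp`. The key lemma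
  `Dp_key` excludes this: by bounded cancellation (`bcc`), with a constant growing no faster than
  `Mn n`, either `g` moves a point of its axis by at most `Mn n` for `dn n`, and then its orbit is
  a piece, or the axis segment is so long for `dn n` that the element `w` of the piece commutes
  with `g` (`commute_of_small`), and then `g` preserves the piece of `w` up to a bounded error.
* Unbounded orbits (`le_Dp_vv`). The element `a ^ L * b ^ L` with `L` large is not in a piece with
  `1`, because the lengths of `phi ^ n (a ^ L)` and `phi ^ n (b ^ L)` are at least `L` times the
  Fibonacci numbers that bound `Mn n` up to a constant; the element `w` of such a piece would
  commute with both generators. By coarse additivity its powers escape to infinity.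
* The space `Rz` is the graph in which the two ends of every piece are joined by an edge of length
  one, built as a metric quotient of pairs of vertices with a parameter. It is geodesic, and its
  vertex set is isometric to `F` with the metric `Dp`.
* Uniform growth (`le_growthRate`). Map `F` to the affine group of `ℚ` by `a ↦ (x ↦ 2x)`,
  `b ↦ (x ↦ x + 1)`. For any symmetric generating set `U`, there are two elements of `U ^ 2` whose
  images are distinct and have the same linear part `2 ^ k`, `k ≥ 1` (`exists_pair`). Distinct
  words of length `n` in them are distinct, by uniqueness of digit expansions, so
  `|U ^ (2 n)| ≥ 2 ^ n`. The same affine images show that `a ^ m` and `b ^ l` never commute for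
  `m, l ≥ 1`, which excludes a cyclic subgroup of finite index.
-/

open Pointwise Filter

noncomputable section

universe u v

/-- A witness for STATEMENT 19: a finitely generated group with a
non-elementary `(κ,N)`-acylindrical action on a `δ`-hyperbolic geodesic space,
with uniform exponential growth, but without the short loxodromic property. -/
structure NoShortLoxodromicWitness where
  G : Type
  X : Type
  [grp : Group G]
  [ms : MetricSpace X]
  [act : MulAction G X]
  δ : ℝ
  κ : ℝ
  N : ℝ
  δ_pos : 0 < δ
  δ_le_κ : δ ≤ κ
  N_pos : 0 < N
  fg : Group.FG G
  hyperbolic : IsDeltaHyperbolic X δ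
  geodesic : IsGeodesicSpace X
  isometric : IsometricAction G X
  acylindrical : AcylindricalAction G X δ κ N
  unbounded_orbit : ∃ x : X, ¬ Bornology.IsBounded (MulAction.orbit G x)
  not_virtually_cyclic : ¬ VirtuallyCyclic G
  uniform_exponential_growth : ∃ ξ : ℝ, 0 < ξ ∧
    ∀ U : Set G, U.Finite → U⁻¹ = U → Subgroup.closure U = ⊤ → ξ ≤ growthRate U
  no_short_loxodromic : ∀ n : ℕ, 1 ≤ n →
    ∃ U : Set G, U.Finite ∧ U⁻¹ = U ∧ Subgroup.closure U = ⊤ ∧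
      ∀ g ∈ U ^ n, ¬ IsLoxodromic X g

namespace NSL

/-! ### Integer trees and shifts along segments -/

/-- `m` lies on the segment from `x` to `y` for the distance `d`. -/
def Btw {V : Type*} (d : V → V → ℕ) (x m y : V) : Prop := d x m + d m y = d x y

/-- `d` is a left-invariant `ℤ`-tree metric on the group `G`: a `0`-hyperbolic metric with
integer values whose segments are full and whose triples have medians. -/
structure IsTreeMetric {G : Type*} [Group G] (d : G → G → ℕ) : Prop where
  self : ∀ x, d x x = 0
  eq_of : ∀ x y, d x y = 0 → x = y
  symm : ∀ x y, d x y = d y x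
  tri : ∀ x y z, d x z ≤ d x y + d y z
  inv : ∀ g x y, d (g * x) (g * y) = d x y
  four : ∀ x y z t, d x y + d z t ≤ max (d x z + d y t) (d x t + d y z)
  pt : ∀ x y r, r ≤ d x y → ∃ z, d x z = r ∧ Btw d x z y
  med : ∀ x y z, ∃ m, Btw d x m y ∧ Btw d y m z ∧ Btw d x m z

/-- `D` is a left-invariant pseudo-metric that does not increase when a `d`-segment is replaced
by a subsegment. -/
structure IsMonotoneMetric {G : Type*} [Group G] (d D : G → G → ℕ) : Prop where
  symm : ∀ x y, D x y = D y x
  tri : ∀ x y z, D x z ≤ D x y + D y z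
  inv : ∀ g x y, D (g * x) (g * y) = D x y
  mono : ∀ x m y, Btw d x m y → D x m ≤ D x y

section Tree

variable {G : Type*} [Group G] {d D : G → G → ℕ}

theorem Btw.symm (hd : IsTreeMetric d) {x m y : G} (h : Btw d x m y) : Btw d y m x := by
  unfold Btw at *
  have := hd.symm x m
  have := hd.symm m y
  have := hd.symm x y
  omega

theorem Btw.smul (hd : IsTreeMetric d) {x m y : G} (h : Btw d x m y) (g : G) :
    Btw d (g * x) (g * m) (g * y) := by
  unfold Btw at *
  rw [hd.inv, hd.inv, hd.inv, h]

/-- A side of a triangle in a tree is covered by the two other sides. -/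
theorem Btw.split (hd : IsTreeMetric d) {x m y : G} (h : Btw d x m y) (z : G) :
    Btw d x m z ∨ Btw d z m y := by
  unfold Btw at *
  have h1 := hd.four m z x y
  have h2 := hd.tri x m z
  have h3 := hd.tri z m y
  have := hd.symm x m
  have := hd.symm z m
  have := hd.symm x z
  rcases le_max_iff.1 h1 with h | h <;> omega

theorem Btw.trans_left (hd : IsTreeMetric d) {x m z y : G} (h : Btw d x m z) (h' : Btw d x z y) :
    Btw d x m y := by
  unfold Btw at *
  have := hd.tri m z y
  have := hd.tri x m y
  omega

/-- Segments of a tree are convex. -/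
theorem Btw.convex (hd : IsTreeMetric d) {a b x y m : G} (hx : Btw d a x b) (hy : Btw d a y b)
    (h : Btw d x m y) : Btw d a m b := by
  rcases h.split hd a with h1 | h1
  · exact (h1.symm hd).trans_left hd hx
  · exact h1.trans_left hd hy

/-- Two points of a segment are ordered by their distance to the origin. -/
theorem Btw.order (hd : IsTreeMetric d) {x y z z' : G} (h : Btw d x z y) (h' : Btw d x z' y)
    (hle : d x z ≤ d x z') : Btw d x z z' := by
  rcases h.split hd z' with h1 | h1
  · exact h1
  · unfold Btw at *
    have := hd.symm z z'
    omega

theorem Btw.unique (hd : IsTreeMetric d) {x y z z' : G} (h : Btw d x z y) (h' : Btw d x z' y)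
    (he : d x z = d x z') : z = z' := by
  have := h.order hd h' he.le
  unfold Btw at this
  exact hd.eq_of _ _ (by omega)

theorem IsTreeMetric.monotone (hd : IsTreeMetric d) : IsMonotoneMetric d d :=
  ⟨hd.symm, hd.tri, hd.inv, fun x m y h => by unfold Btw at h; omega⟩

theorem IsMonotoneMetric.mono' (hd : IsTreeMetric d) (hD : IsMonotoneMetric d D) {x m y : G}
    (h : Btw d x m y) : D m y ≤ D x y := by
  rw [hD.symm m, hD.symm x]
  exact hD.mono _ _ _ (h.symm hd)

/-- An element that moves the endpoints of `[x, y]` by at most `R` maps the points of `[x, y]`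
far from both endpoints into `[x, y]`. -/
theorem shift_mem (hd : IsTreeMetric d) (hD : IsMonotoneMetric d D) {x y h z : G} {R : ℕ}
    (hx : D x (h * x) ≤ R) (hy : D y (h * y) ≤ R) (hz : Btw d x z y)
    (h1 : R < D x z) (h2 : R < D z y) : Btw d x (h * z) y := by
  rcases (hz.smul hd h).split hd x with h3 | h3
  · have := hD.mono _ _ _ h3
    rw [hD.inv, hD.symm (h * x)] at this
    omega
  rcases h3.split hd y with h4 | h4
  · exact h4
  · have := hD.mono' hd h4
    rw [hD.inv] at this
    omega

theorem shift_dist (hD : IsMonotoneMetric d D) {x h z : G} {R : ℕ}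
    (hx : D x (h * x) ≤ R) : D x z ≤ D x (h * z) + R := by
  have := hD.tri (h * x) x (h * z)
  rw [hD.inv, hD.symm (h * x)] at this
  omega

theorem shift_dist' (hD : IsMonotoneMetric d D) {x h z : G} {R : ℕ}
    (hx : D x (h * x) ≤ R) : D x (h * z) ≤ D x z + R := by
  have := hD.tri x (h * x) (h * z)
  rw [hD.inv] at this
  omega

theorem shift_add (hd : IsTreeMetric d) (hD : IsMonotoneMetric d D) {x h z z' : G} {R : ℕ}
    (hx : D x (h * x) ≤ R) (hz : Btw d x z z') (h1 : R < D x z) :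
    d x (h * z') = d x (h * z) + d z z' := by
  rcases (hz.smul hd h).split hd x with h3 | h3
  · have := hD.mono _ _ _ h3
    rw [hD.inv, hD.symm (h * x)] at this
    omega
  · unfold Btw at h3
    rw [hd.inv] at h3
    exact h3.symm

/-- The amount by which `h` shifts a point of `[x, y]` does not depend on the point. -/
theorem shift_const (hd : IsTreeMetric d) (hD : IsMonotoneMetric d D) {x y h z z' : G} {R : ℕ}
    (hx : D x (h * x) ≤ R) (hz : Btw d x z y) (hz' : Btw d x z' y)
    (h1 : R < D x z) (h1' : R < D x z') :
    d x (h * z') + d x z = d x (h * z) + d x z' := by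
  rcases le_total (d x z) (d x z') with h | h
  · have h2 := hz.order hd hz' h
    have := shift_add hd hD hx h2 h1
    unfold Btw at h2
    omega
  · have h2 := hz'.order hd hz h
    have := shift_add hd hD hx h2 h1'
    unfold Btw at h2
    omega

/-- Two elements which move both endpoints of a long segment only a little commute, since they
shift its middle point by commuting translations and the action is free. -/
theorem commute_of_small (hd : IsTreeMetric d) {x y g w : G} {c : ℕ}
    (hgx : d x (g * x) ≤ c) (hgy : d y (g * y) ≤ c) (hwx : d x (w * x) ≤ c)
    (hwy : d y (w * y) ≤ c) (hxy : 4 * c + 2 ≤ d x y) : g * w = w * g := by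
  have hD := hd.monotone
  obtain ⟨z, hz, hb⟩ := hd.pt x y (2 * c + 1) (by omega)
  have hzy : 2 * c + 1 ≤ d z y := by unfold Btw at hb; omega
  have bg := shift_mem hd hD hgx hgy hb (by omega) (by omega)
  have bw := shift_mem hd hD hwx hwy hb (by omega) (by omega)
  have e1 := shift_dist hD (z := z) hgx
  have e2 := shift_dist hD (z := z) hgy
  have e3 := shift_dist hD (z := z) hwx
  have e4 := shift_dist hD (z := z) hwy
  have s1 := hd.symm y z
  have s2 := hd.symm y (g * z)
  have s3 := hd.symm y (w * z)
  have bwg := shift_mem hd hD hwx hwy bg (by omega) (by omega)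
  have bgw := shift_mem hd hD hgx hgy bw (by omega) (by omega)
  have c1 := shift_const hd hD hgx hb bw (by omega) (by omega)
  have c2 := shift_const hd hD hwx hb bg (by omega) (by omega)
  have := bgw.unique hd bwg (by omega)
  rw [← mul_assoc, ← mul_assoc] at this
  exact mul_right_cancel this

end Tree

/-! ### Acylindricity of a coarsely additive metric -/

/-- In a finite set of more than `K` natural numbers, some pair of elements has a gap `e` such
that `K` steps of size `e` fit between the smallest and the largest element. -/
theorem exists_small_gap (P : Finset ℕ) (K : ℕ) (hK : 1 ≤ K) (hP : K < P.card) :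
    ∃ p ∈ P, ∃ q ∈ P, ∃ m ∈ P, ∃ M ∈ P, p < q ∧ m + K * (q - p) ≤ M := by
  classical
  have hne : P.Nonempty := Finset.card_pos.1 (by omega)
  have hm := P.min'_mem hne
  have hM := P.max'_mem hne
  set m := P.min' hne
  set M := P.max' hne
  by_contra hcon
  push Not at hcon
  have hmM : ∀ p ∈ P, m ≤ p ∧ p ≤ M := fun p hp => ⟨P.min'_le p hp, P.le_max' p hp⟩
  -- A counterexample makes `t ↦ K (t - m) / (M - m + 1)` injective with values in `[0, K)`.
  have hinj : ∀ p ∈ P, ∀ q ∈ P, p < q →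
      K * (p - m) / (M - m + 1) < K * (q - m) / (M - m + 1) := by
    intro p hp q hq hpq
    have h1 := hcon p hp q hq m hm M hM hpq
    have hp' := hmM p hp
    have h2 : K * (q - m) = K * (p - m) + K * (q - p) := by
      rw [← mul_add]; congr 1; omega
    have h3 : K * (p - m) + (M - m + 1) ≤ K * (q - m) := by omega
    calc K * (p - m) / (M - m + 1) < K * (p - m) / (M - m + 1) + 1 := Nat.lt_succ_self _
      _ = (K * (p - m) + (M - m + 1)) / (M - m + 1) := by
          rw [Nat.add_div_right _ (by omega)]
      _ ≤ _ := Nat.div_le_div_right h3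
  have hcard : P.card ≤ (Finset.range K).card := by
    apply Finset.card_le_card_of_injOn (fun t => K * (t - m) / (M - m + 1))
    · intro t ht
      have := hmM t ht
      simp only [Finset.coe_range, Set.mem_Iio]
      rw [Nat.div_lt_iff_lt_mul (by omega)]
      exact Nat.mul_lt_mul_of_pos_left (by omega) (by omega)
    · intro p hp q hq hpq
      rcases lt_trichotomy p q with h | h | h
      · exact absurd hpq (hinj p hp q hq h).ne
      · exact h
      · exact absurd hpq (hinj q hq p hp h).ne'
  rw [Finset.card_range] at hcard
  omega

section Acyl

variable {G : Type*} [Group G] {d D : G → G → ℕ}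

/-- The coarse additivity of `D` along `d`-segments that makes `D` behave like a quasi-tree
metric. -/
structure IsCoarselyAdditive (d D : G → G → ℕ) : Prop extends IsMonotoneMetric d D where
  self : ∀ x, D x x = 0
  add : ∀ x m y, Btw d x m y → D x m + D m y ≤ D x y + 1
  le : ∀ x y, D x y ≤ d x y

theorem exists_btw_eq (hd : IsTreeMetric d) (hD : IsCoarselyAdditive d D) (T n : ℕ) :
    ∀ x y, d x y = n → T ≤ D x y → ∃ u, Btw d x u y ∧ D x u = T := by
  induction n with
  | zero =>
    intro x y h hT
    obtain rfl := hd.eq_of _ _ h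
    refine ⟨x, by simp [Btw, hd.self], ?_⟩
    rw [hD.self] at *
    omega
  | succ n ih =>
    intro x y h hT
    rcases hT.eq_or_lt with h1 | h1
    · exact ⟨y, by simp [Btw, hd.self], h1.symm⟩
    obtain ⟨z, hz, hb⟩ := hd.pt x y n (by omega)
    have h2 := hD.le z y
    have h3 := hD.tri x z y
    obtain ⟨u, hu, e⟩ := ih x z hz (by unfold Btw at hb; omega)
    exact ⟨u, hu.trans_left hd hb, e⟩

/-- Acylindricity. The elements moving `x` and `y` by at most `R` act on the middle of `[x, y]`
as pairwise distinct shifts. If there are many of them, some quotient `g` of two of them shifts by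
so little that `L` of its steps have `D`-length at most `1`; the hypothesis `key` then says that
the orbits of `g` are bounded, although `g` shifts along `[x, y]` forever. -/
theorem acyl_of_key (hd : IsTreeMetric d) (hD : IsCoarselyAdditive d D) (L : ℕ) (hL : 1 ≤ L)
    (key : ∀ g r : G, g ≠ 1 → (∀ i ≤ L, d r (g ^ i * r) = i * d r (g * r)) →
      D r (g ^ L * r) ≤ 1 → ∀ k, D r (g ^ k * r) ≤ 3) (R : ℕ) :
    ∃ κ N : ℕ, ∀ x y, κ ≤ D x y →
      {h : G | D x (h * x) ≤ R ∧ D y (h * y) ≤ R}.Finite ∧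
      {h : G | D x (h * x) ≤ R ∧ D y (h * y) ≤ R}.ncard ≤ N := by
  refine ⟨20 * R + 40, (2 * R + 2) * L, fun x y hxy => ?_⟩
  set S := {h : G | D x (h * x) ≤ R ∧ D y (h * y) ≤ R}
  have hM := hD.toIsMonotoneMetric
  obtain ⟨u, hu, hxu⟩ := exists_btw_eq hd hD (10 * R + 20) _ x y rfl (by omega)
  have huy : 10 * R + 20 ≤ D u y := by have := hD.tri x u y; omega
  have hsy : ∀ z, D y z = D z y := fun z => hD.symm _ _
  -- behaviour of a single element of `S`
  have mem : ∀ h ∈ S, ∀ z, Btw d x z y → R < D x z → R < D z y →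
      Btw d x (h * z) y ∧ D x z ≤ D x (h * z) + R ∧ D z y ≤ D (h * z) y + R ∧
      D x (h * z) ≤ D x z + R ∧ d x (h * z) + d x u = d x (h * u) + d x z := by
    intro h hh z hz h1 h2
    refine ⟨shift_mem hd hM hh.1 hh.2 hz h1 h2, shift_dist hM hh.1, ?_, shift_dist' hM hh.1,
      shift_const hd hM hh.1 hu hz (by omega) h1⟩
    have := shift_dist hM (z := z) hh.2
    rwa [hsy, hsy] at this
  have hinv : ∀ h ∈ S, h⁻¹ ∈ S := by
    intro h hh
    refine ⟨?_, ?_⟩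
    · rw [← hM.inv h, mul_inv_cancel_left, hM.symm]; exact hh.1
    · rw [← hM.inv h, mul_inv_cancel_left, hM.symm]; exact hh.2
  have memu := fun h hh => mem h hh u hu (by omega) (by omega)
  have hclose : ∀ h ∈ S, D u (h * u) ≤ R + 1 := by
    intro h hh
    obtain ⟨b, e1, e2, e3, -⟩ := memu h hh
    rcases le_total (d x u) (d x (h * u)) with hle | hle
    · have := hD.add _ _ _ (hu.order hd b hle); omega
    · have := hD.add _ _ _ (b.order hd hu hle)
      rw [hD.symm (h * u) u] at this
      omega
  have finj : Set.InjOn (fun h => d x (h * u)) S := by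
    intro h hh h' hh' e
    exact mul_right_cancel ((memu h hh).1.unique hd (memu h' hh').1 e)
  have hfin : S.Finite := by
    refine Set.Finite.of_finite_image ((Set.finite_Iic (d x y)).subset ?_) finj
    rintro _ ⟨h, hh, rfl⟩
    have := (memu h hh).1
    simp only [Set.mem_Iic]
    unfold Btw at this
    omega
  refine ⟨hfin, ?_⟩
  by_contra hcard
  push Not at hcard
  classical
  obtain ⟨K, hKdef⟩ : ∃ K, K = (2 * R + 2) * L := ⟨_, rfl⟩
  have hK1 : 1 ≤ K := hKdef ▸ Nat.mul_pos (by omega) hL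
  have hcardP : K < (hfin.toFinset.image fun h => d x (h * u)).card := by
    rw [Finset.card_image_of_injOn (by simpa using finj), ← Set.ncard_eq_toFinset_card S hfin,
      hKdef]
    exact hcard
  obtain ⟨_, hp, _, hq, _, hm, _, hMx, hlt, hgap⟩ := exists_small_gap _ K hK1 hcardP
  simp only [Finset.mem_image, Set.Finite.mem_toFinset] at hp hq hm hMx
  obtain ⟨a, ha, rfl⟩ := hp
  obtain ⟨b, hb, rfl⟩ := hq
  obtain ⟨h₀, hh₀, rfl⟩ := hm
  obtain ⟨h₁, hh₁, rfl⟩ := hMx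
  obtain ⟨g, hg⟩ : ∃ g, g = b * a⁻¹ := ⟨_, rfl⟩
  obtain ⟨e, he⟩ : ∃ e, e = d x (b * u) - d x (a * u) := ⟨_, rfl⟩
  rw [← he] at hgap
  have hepos : 0 < e := by omega
  have gstep : ∀ z, Btw d x z y → 3 * R < D x z → 3 * R < D z y →
      Btw d x (g * z) y ∧ d x (g * z) = d x z + e := by
    intro z hz h1 h2
    obtain ⟨b1, e1, e2, -, -⟩ := mem _ (hinv a ha) z hz (by omega) (by omega)
    obtain ⟨-, -, -, -, c1⟩ := mem a ha (a⁻¹ * z) b1 (by omega) (by omega)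
    obtain ⟨b2, -, -, -, c2⟩ := mem b hb (a⁻¹ * z) b1 (by omega) (by omega)
    rw [mul_inv_cancel_left] at c1
    rw [← mul_assoc, ← hg] at b2 c2
    refine ⟨b2, ?_⟩
    omega
  have hg1 : g ≠ 1 := by
    intro h
    have := (gstep u hu (by omega) (by omega)).2
    rw [h, one_mul] at this
    omega
  obtain ⟨r, hr⟩ : ∃ r, r = h₀ * u := ⟨_, rfl⟩
  obtain ⟨br, er1, er2, -, -⟩ := memu h₀ hh₀
  have hcr := hclose h₀ hh₀
  rw [← hr] at br er1 er2 hgap hcr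
  obtain ⟨bR, eR1, eR2, -, -⟩ := memu h₁ hh₁
  have iter : ∀ k ≤ K, Btw d x (g ^ k * r) y ∧ d x (g ^ k * r) = d x r + k * e := by
    intro k
    induction k with
    | zero => intro _; simpa using br
    | succ k ih =>
      intro hk
      obtain ⟨b1, e1⟩ := ih (by omega)
      have hke : (k + 1) * e ≤ K * e := Nat.mul_le_mul_right _ hk
      have hke' : (k + 1) * e = k * e + e := by ring
      have o1 := hD.mono _ _ _ (br.order hd b1 (by omega))
      have o2 : Btw d x (g ^ k * r) (h₁ * u) := b1.order hd bR (by omega)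
      have o3 : Btw d y (h₁ * u) (g ^ k * r) := by
        have := o2; have := bR; have := b1
        have := hd.symm y (h₁ * u)
        have := hd.symm y (g ^ k * r)
        have := hd.symm (h₁ * u) (g ^ k * r)
        unfold Btw at *
        omega
      have o4 := hD.mono _ _ _ o3
      rw [hsy, hsy] at o4
      obtain ⟨b2, e2⟩ := gstep _ b1 (by omega) (by omega)
      rw [← mul_assoc, ← pow_succ'] at b2 e2
      exact ⟨b2, by omega⟩
  have dist_iter : ∀ k ≤ K, d r (g ^ k * r) = k * e := by
    intro k hk
    obtain ⟨b1, e1⟩ := iter k hk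
    have := br.order hd b1 (by omega)
    unfold Btw at this
    omega
  have hgr : d r (g * r) = e := by simpa using dist_iter 1 hK1
  have hLK : L ≤ K := hKdef ▸ Nat.le_mul_of_pos_left _ (by omega)
  have hDK : D r (g ^ K * r) ≤ 2 * R + 2 := by
    obtain ⟨b1, e1⟩ := iter K le_rfl
    have o1 := br.order hd b1 (by omega)
    have o2 : Btw d x (g ^ K * r) (h₁ * u) := b1.order hd bR (by omega)
    have o3 : Btw d r (g ^ K * r) (h₁ * u) := by
      have := br.order hd bR (by omega)
      unfold Btw at *
      omega
    have := hD.mono _ _ _ o3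
    have := hD.tri r u (h₁ * u)
    have := hclose _ hh₁
    have := hD.symm r u
    omega
  have hDL : D r (g ^ L * r) ≤ 1 := by
    by_contra hcon
    push Not at hcon
    have : ∀ j, 1 ≤ j → j ≤ 2 * R + 2 → j + 1 ≤ D r (g ^ (j * L) * r) := by
      intro j hj
      induction j, hj using Nat.le_induction with
      | base => intro _; rw [one_mul]; omega
      | succ j hj ih =>
        intro hj2
        have h1 := ih (by omega)
        have hle : (j + 1) * L ≤ K := hKdef ▸ Nat.mul_le_mul_right _ hj2
        have hle2 : (j + 1) * L = j * L + L := by ring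
        have h2 := dist_iter _ hle
        have h3 := dist_iter (j * L) (by omega)
        have h4 := dist_iter L hLK
        have e5 : g ^ ((j + 1) * L) * r = g ^ (j * L) * (g ^ L * r) := by
          rw [hle2, pow_add, mul_assoc]
        have h6 : Btw d r (g ^ (j * L) * r) (g ^ ((j + 1) * L) * r) := by
          unfold Btw
          rw [h3, h2, e5, hd.inv, h4, hle2, add_mul]
        have h7 := hD.add _ _ _ h6
        rw [e5, hD.inv] at h7
        rw [e5]
        omega
    have := this (2 * R + 2) (by omega) le_rfl
    rw [← hKdef] at this
    omega
  have hbd := key g r hg1 (fun i hi => by rw [hgr]; exact dist_iter i (hi.trans hLK)) hDL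
  have forever : ∀ k, Btw d x (g ^ k * r) y ∧ d x (g ^ k * r) = d x r + k * e := by
    intro k
    induction k with
    | zero => simpa using br
    | succ k ih =>
      obtain ⟨b1, e1⟩ := ih
      have h1 := hbd k
      have h2 := hD.tri x (g ^ k * r) r
      have h3 := hD.tri r (g ^ k * r) y
      rw [hD.symm (g ^ k * r) r] at h2
      obtain ⟨b2, e2⟩ := gstep _ b1 (by omega) (by omega)
      rw [← mul_assoc, ← pow_succ'] at b2 e2
      exact ⟨b2, by rw [e2, e1]; ring⟩
  obtain ⟨b1, e1⟩ := forever (d x y + 1)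
  have : d x y + 1 ≤ (d x y + 1) * e := Nat.le_mul_of_pos_right _ hepos
  unfold Btw at b1
  omega

end Acyl


/-! ### The Cayley tree of a free group -/

section FreeGroupTree

variable {α : Type*} [DecidableEq α]

/-- The length of the longest common prefix of two lists. -/
def lcp {β : Type*} [DecidableEq β] : List β → List β → ℕ
  | a :: u, b :: v => if a = b then lcp u v + 1 else 0
  | _, _ => 0

theorem lcp_comm {β : Type*} [DecidableEq β] (u v : List β) : lcp u v = lcp v u := by
  induction u generalizing v with
  | nil => cases v <;> rfl
  | cons a u ih =>
    cases v with
    | nil => rfl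
    | cons b v =>
      simp only [lcp, eq_comm (a := a), ih]

theorem lcp_le {β : Type*} [DecidableEq β] (u v : List β) : lcp u v ≤ u.length := by
  induction u generalizing v with
  | nil => cases v <;> simp [lcp]
  | cons a u ih =>
    cases v with
    | nil => simp [lcp]
    | cons b v =>
      have := ih v
      simp only [lcp, List.length_cons]
      split <;> omega

theorem take_lcp {β : Type*} [DecidableEq β] (u v : List β) :
    u.take (lcp u v) = v.take (lcp u v) := by
  induction u generalizing v with
  | nil => cases v <;> simp [lcp]
  | cons a u ih =>
    cases v with
    | nil => simp [lcp]
    | cons b v =>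
      simp only [lcp]
      split
      · next h => simp [h, ih v]
      · simp

theorem lcp_ultra {β : Type*} [DecidableEq β] (u v w : List β) :
    lcp u v ≤ lcp u w ∨ lcp v w ≤ lcp u w := by
  induction u generalizing v w with
  | nil => left; simp [lcp]
  | cons a u ih =>
    cases v with
    | nil => left; simp [lcp]
    | cons b v =>
      cases w with
      | nil => right; simp [lcp]
      | cons c w =>
        simp only [lcp]
        have := ih v w
        split_ifs <;> first | omega | (exfalso; simp_all)

theorem norm_inv_mul_mk (u v : List (α × Bool)) (hu : FreeGroup.IsReduced u)
    (hv : FreeGroup.IsReduced v) :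
    ((FreeGroup.mk u)⁻¹ * FreeGroup.mk v).norm + 2 * lcp u v = u.length + v.length := by
  induction u generalizing v with
  | nil =>
    have : ((FreeGroup.mk ([] : List (α × Bool)))⁻¹ * FreeGroup.mk v) = FreeGroup.mk v := by
      rw [← FreeGroup.one_eq_mk]; simp
    rw [this, FreeGroup.norm, FreeGroup.toWord_mk, hv.reduce_eq]
    simp [lcp]
  | cons a u ih =>
    cases v with
    | nil =>
      have : ((FreeGroup.mk (a :: u))⁻¹ * FreeGroup.mk ([] : List (α × Bool)))
          = (FreeGroup.mk (a :: u))⁻¹ := by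
        rw [← FreeGroup.one_eq_mk]; simp
      rw [this, FreeGroup.norm_inv_eq, FreeGroup.norm, FreeGroup.toWord_mk, hu.reduce_eq]
      simp [lcp]
    | cons b v =>
      have hu' : FreeGroup.IsReduced u := hu.infix (List.suffix_cons a u).isInfix
      have hv' : FreeGroup.IsReduced v := hv.infix (List.suffix_cons b v).isInfix
      by_cases hab : a = b
      · subst hab
        have e : ∀ w : List (α × Bool), FreeGroup.mk (a :: w) = FreeGroup.mk [a] * FreeGroup.mk w :=
          fun w => by rw [FreeGroup.mul_mk]; rfl
        have : (FreeGroup.mk (a :: u))⁻¹ * FreeGroup.mk (a :: v)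
            = (FreeGroup.mk u)⁻¹ * FreeGroup.mk v := by
          rw [e u, e v]; group
        rw [this]
        have := ih v hu' hv'
        simp only [lcp, if_true, List.length_cons]
        omega
      · have hr : FreeGroup.IsReduced (FreeGroup.invRev (a :: u) ++ b :: v) := by
          have h1 : FreeGroup.IsReduced (FreeGroup.invRev (a :: u)) := by
            rw [FreeGroup.isReduced_iff_reduce_eq, FreeGroup.reduce_invRev, hu.reduce_eq]
          refine List.isChain_append.2 ⟨h1, hv, ?_⟩
          intro s hs t ht
          simp [FreeGroup.invRev] at hs ht
          subst hs ht
          obtain ⟨a1, a2⟩ := a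
          obtain ⟨b1, b2⟩ := b
          simp at hab ⊢
          intro h
          have := hab h
          cases a2 <;> cases b2 <;> simp_all
        rw [FreeGroup.inv_mk, FreeGroup.mul_mk, FreeGroup.norm, FreeGroup.toWord_mk, hr.reduce_eq]
        simp [lcp, hab]

/-- The word metric of a free group with respect to its basis. -/
def wd (x y : FreeGroup α) : ℕ := (x⁻¹ * y).norm

theorem wd_lcp (x y : FreeGroup α) : wd x y + 2 * lcp x.toWord y.toWord = x.norm + y.norm := by
  have := norm_inv_mul_mk x.toWord y.toWord FreeGroup.isReduced_toWord FreeGroup.isReduced_toWord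
  rwa [FreeGroup.mk_toWord, FreeGroup.mk_toWord] at this

theorem wd_inv (g x y : FreeGroup α) : wd (g * x) (g * y) = wd x y := by
  unfold wd; congr 1; group

theorem wd_symm (x y : FreeGroup α) : wd x y = wd y x := by
  unfold wd; rw [← FreeGroup.norm_inv_eq]; congr 1; group

theorem one_wd (x : FreeGroup α) : wd 1 x = x.norm := by simp [wd]

theorem exists_prefix (y : FreeGroup α) (r : ℕ) (hr : r ≤ y.norm) :
    wd 1 (FreeGroup.mk (y.toWord.take r)) = r ∧
      Btw wd 1 (FreeGroup.mk (y.toWord.take r)) y := by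
  have h1 : wd 1 (FreeGroup.mk (y.toWord.take r)) = r := by
    rw [one_wd, FreeGroup.norm, FreeGroup.toWord_mk, FreeGroup.IsReduced.reduce_eq]
    · simpa [FreeGroup.norm] using hr
    · exact FreeGroup.isReduced_toWord.infix (List.take_prefix _ _).isInfix
  have h2 : wd (FreeGroup.mk (y.toWord.take r)) y = y.norm - r := by
    have e : y = FreeGroup.mk (y.toWord.take r) * FreeGroup.mk (y.toWord.drop r) := by
      rw [FreeGroup.mul_mk, List.take_append_drop, FreeGroup.mk_toWord]
    have : (FreeGroup.mk (y.toWord.take r))⁻¹ * y = FreeGroup.mk (y.toWord.drop r) := by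
      rw [inv_mul_eq_iff_eq_mul]; exact e
    rw [wd, this, FreeGroup.norm, FreeGroup.toWord_mk, FreeGroup.IsReduced.reduce_eq]
    · simp [FreeGroup.norm]
    · exact FreeGroup.isReduced_toWord.infix (List.drop_suffix _ _).isInfix
  refine ⟨h1, ?_⟩
  unfold Btw
  rw [h1, h2, one_wd]
  omega

theorem wd_tree : IsTreeMetric (wd : FreeGroup α → FreeGroup α → ℕ) where
  self x := by simp [wd]
  eq_of x y h := by
    rw [wd, FreeGroup.norm_eq_zero, inv_mul_eq_one] at h
    exact h
  symm := wd_symm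
  tri x y z := by
    unfold wd
    have := FreeGroup.norm_mul_le (x⁻¹ * y) (y⁻¹ * z)
    rwa [show x⁻¹ * y * (y⁻¹ * z) = x⁻¹ * z by group] at this
  inv := wd_inv
  four x y z t := by
    -- after moving `t` to the origin this is the ultrametric inequality for common prefixes
    have e : ∀ p q, wd p q = wd (t⁻¹ * p) (t⁻¹ * q) := fun p q => (wd_inv _ _ _).symm
    rw [e x y, e z t, e x z, e y t, e x t, e y z, inv_mul_cancel]
    generalize t⁻¹ * x = x; generalize t⁻¹ * y = y; generalize t⁻¹ * z = z
    rw [wd_symm z 1, wd_symm y 1, wd_symm x 1, one_wd, one_wd, one_wd]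
    have h1 := wd_lcp x y
    have h2 := wd_lcp x z
    have h3 := wd_lcp y z
    have h4 := lcp_ultra x.toWord z.toWord y.toWord
    rw [lcp_comm z.toWord] at h4
    rw [le_max_iff]
    omega
  pt x y r hr := by
    have hn : wd x y = (x⁻¹ * y).norm := rfl
    obtain ⟨h1, h2⟩ := exists_prefix (x⁻¹ * y) r (by omega)
    refine ⟨x * FreeGroup.mk ((x⁻¹ * y).toWord.take r), ?_, ?_⟩
    · have := wd_inv x 1 (FreeGroup.mk ((x⁻¹ * y).toWord.take r))
      rwa [h1, mul_one] at this
    · unfold Btw at *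
      rw [← wd_inv x, ← wd_inv x _ (x⁻¹ * y), ← wd_inv x _ (x⁻¹ * y), mul_inv_cancel_left,
        mul_one] at h2
      exact h2
  med x y z := by
    suffices H : ∀ y z : FreeGroup α, ∃ m, Btw wd 1 m y ∧ Btw wd y m z ∧ Btw wd 1 m z by
      obtain ⟨m, h1, h2, h3⟩ := H (x⁻¹ * y) (x⁻¹ * z)
      refine ⟨x * m, ?_, ?_, ?_⟩
      all_goals unfold Btw at *
      · rw [← wd_inv x, ← wd_inv x m, ← wd_inv x _ (x⁻¹ * y), mul_inv_cancel_left, mul_one] at h1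
        exact h1
      · rw [← wd_inv x, ← wd_inv x m, ← wd_inv x (x⁻¹ * y) (x⁻¹ * z), mul_inv_cancel_left,
          mul_inv_cancel_left] at h2
        exact h2
      · rw [← wd_inv x, ← wd_inv x m, ← wd_inv x _ (x⁻¹ * z), mul_inv_cancel_left, mul_one] at h3
        exact h3
    intro y z
    have l1 := lcp_le y.toWord z.toWord
    have l2 := lcp_le z.toWord y.toWord
    rw [lcp_comm] at l2
    obtain ⟨h1, h2⟩ := exists_prefix y (lcp y.toWord z.toWord) l1
    obtain ⟨h3, h4⟩ := exists_prefix z (lcp y.toWord z.toWord) l2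
    rw [← take_lcp] at h3 h4
    refine ⟨_, h2, ?_, h4⟩
    unfold Btw at *
    have := wd_lcp y z
    rw [wd_symm y]
    have := one_wd y
    have := one_wd z
    omega

/-- A free group with at least two generators has trivial center. -/
theorem eq_one_of_commute {w : FreeGroup Bool} (hw : ∀ i, FreeGroup.of i * w = w * FreeGroup.of i) :
    w = 1 := by
  by_contra hne
  obtain ⟨⟨i, ε⟩, l, hl⟩ : ∃ s l, w.toWord = s :: l := by
    cases h : w.toWord with
    | nil => exact absurd (FreeGroup.toWord_eq_nil_iff.1 h) hne
    | cons s l => exact ⟨s, l, rfl⟩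
  have hr : FreeGroup.IsReduced w.toWord := FreeGroup.isReduced_toWord
  have h1 : (FreeGroup.of (!i) * w).toWord = (!i, true) :: (i, ε) :: l := by
    rw [FreeGroup.toWord_mul, FreeGroup.toWord_of, hl, FreeGroup.IsReduced.reduce_eq]
    · rfl
    · rw [hl] at hr
      exact List.isChain_cons_cons.2 ⟨by simp, hr⟩
  have h2 := FreeGroup.toWord_mul_sublist w (FreeGroup.of (!i))
  rw [← hw, h1, hl, FreeGroup.toWord_of] at h2
  have h3 := h2.eq_of_length (by simp)
  simp at h3

end FreeGroupTree


/-! ### The Fibonacci automorphism and its iterates -/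

section Fibonacci

/-- The free group of rank two. -/
abbrev F : Type := FreeGroup Bool

/-- The first generator of the free group of rank two. -/
abbrev ga : F := FreeGroup.of true

/-- The second generator of the free group of rank two. -/
abbrev gb : F := FreeGroup.of false

/-- The Fibonacci automorphism `a ↦ ab`, `b ↦ a`. -/
def phi : F →* F := FreeGroup.lift fun i => cond i (ga * gb) ga

/-- The inverse `a ↦ b`, `b ↦ b⁻¹a` of the Fibonacci automorphism. -/
def psi : F →* F := FreeGroup.lift fun i => cond i gb (gb⁻¹ * ga)

theorem phi_a : phi ga = ga * gb := by simp [phi]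
theorem phi_b : phi gb = ga := by simp [phi]
theorem psi_a : psi ga = gb := by simp [psi]
theorem psi_b : psi gb = gb⁻¹ * ga := by simp [psi]

theorem psi_phi (x : F) : psi (phi x) = x := by
  have : psi.comp phi = MonoidHom.id F := by
    apply FreeGroup.ext_hom
    rintro (_ | _)
    · change psi (phi gb) = gb
      rw [phi_b, psi_a]
    · change psi (phi ga) = ga
      rw [phi_a, map_mul, psi_a, psi_b, mul_inv_cancel_left]
  exact DFunLike.congr_fun this x

theorem phi_psi (x : F) : phi (psi x) = x := by
  have : phi.comp psi = MonoidHom.id F := by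
    apply FreeGroup.ext_hom
    rintro (_ | _)
    · change phi (psi gb) = gb
      rw [psi_b, map_mul, map_inv, phi_b, phi_a, inv_mul_cancel_left]
    · change phi (psi ga) = ga
      rw [psi_a, phi_b]
  exact DFunLike.congr_fun this x

/-- The iterates of the Fibonacci automorphism. -/
def phiN : ℕ → F →* F
  | 0 => MonoidHom.id F
  | n + 1 => (phiN n).comp phi

theorem phiN_succ (n : ℕ) (x : F) : phiN (n + 1) x = phiN n (phi x) := rfl

theorem phiN_bijective (n : ℕ) : Function.Bijective (phiN n) := by
  induction n with
  | zero => exact Function.bijective_id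
  | succ n ih =>
    exact ih.comp (Function.bijective_iff_has_inverse.2 ⟨psi, psi_phi, phi_psi⟩)

theorem norm_map_le (f : F →* F) (C : ℕ) (hC : ∀ i, (f (FreeGroup.of i)).norm ≤ C) (x : F) :
    (f x).norm ≤ C * x.norm := by
  have : ∀ L : List (Bool × Bool), (f (FreeGroup.mk L)).norm ≤ C * L.length := by
    intro L
    induction L with
    | nil => rw [← FreeGroup.one_eq_mk]; simp
    | cons s L ih =>
      have e : FreeGroup.mk (s :: L) = FreeGroup.mk [s] * FreeGroup.mk L := by
        rw [FreeGroup.mul_mk]; rfl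
      have h1 : (f (FreeGroup.mk [s])).norm ≤ C := by
        obtain ⟨i, ε⟩ := s
        cases ε with
        | true => exact hC i
        | false =>
          have : FreeGroup.mk [(i, false)] = (FreeGroup.of i)⁻¹ := by
            rw [FreeGroup.of, FreeGroup.inv_mk]; rfl
          rw [this, map_inv, FreeGroup.norm_inv_eq]
          exact hC i
      rw [e, map_mul]
      have := FreeGroup.norm_mul_le (f (FreeGroup.mk [s])) (f (FreeGroup.mk L))
      rw [List.length_cons, mul_add]
      omega
  have := this x.toWord
  rwa [FreeGroup.mk_toWord] at this

theorem wd_map_le (f : F →* F) (C : ℕ) (hC : ∀ i, (f (FreeGroup.of i)).norm ≤ C) (x y : F) :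
    wd (f x) (f y) ≤ C * wd x y := by
  have := norm_map_le f C hC (x⁻¹ * y)
  rwa [map_mul, map_inv] at this

theorem wd_phi_le (x y : F) : wd (phi x) (phi y) ≤ 2 * wd x y := by
  apply wd_map_le
  rintro (_ | _)
  · rw [phi_b, FreeGroup.norm_of]; omega
  · rw [phi_a]
    exact (FreeGroup.norm_mul_le _ _).trans (by simp)

theorem wd_le_phi (x y : F) : wd x y ≤ 2 * wd (phi x) (phi y) := by
  have : wd (psi (phi x)) (psi (phi y)) ≤ 2 * wd (phi x) (phi y) := by
    apply wd_map_le
    rintro (_ | _)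
    · rw [psi_b]
      exact (FreeGroup.norm_mul_le _ _).trans (by simp)
    · rw [psi_a, FreeGroup.norm_of]; omega
  rwa [psi_phi, psi_phi] at this

theorem norm_phiN_le (n : ℕ) :
    (phiN n ga).norm ≤ Nat.fib (n + 2) ∧ (phiN n gb).norm ≤ Nat.fib (n + 1) := by
  induction n with
  | zero => simp [phiN]
  | succ n ih =>
    rw [phiN_succ, phiN_succ, phi_a, phi_b, map_mul]
    have := FreeGroup.norm_mul_le (phiN n ga) (phiN n gb)
    have : Nat.fib (n + 1 + 2) = Nat.fib (n + 1) + Nat.fib (n + 2) := Nat.fib_add_two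
    exact ⟨by omega, ih.1⟩

theorem wd_phiN_le (n : ℕ) (x y : F) :
    wd (phiN n x) (phiN n y) ≤ Nat.fib (n + 2) * wd x y := by
  apply wd_map_le
  rintro (_ | _)
  · exact (norm_phiN_le n).2.trans Nat.fib_le_fib_succ
  · exact (norm_phiN_le n).1

/-- The exponent sum of a word in `a` and `b`. -/
def sigma : F →* Multiplicative ℤ := FreeGroup.lift fun _ => Multiplicative.ofAdd 1

theorem sigma_le (x : F) : (sigma x).toAdd ≤ x.norm := by
  have : ∀ L : List (Bool × Bool), (sigma (FreeGroup.mk L)).toAdd ≤ L.length := by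
    intro L
    induction L with
    | nil => rw [← FreeGroup.one_eq_mk]; simp
    | cons s L ih =>
      have e : FreeGroup.mk (s :: L) = FreeGroup.mk [s] * FreeGroup.mk L := by
        rw [FreeGroup.mul_mk]; rfl
      have h1 : (sigma (FreeGroup.mk [s])).toAdd ≤ 1 := by
        obtain ⟨i, ε⟩ := s
        cases ε with
        | true => simp [sigma]
        | false => simp [sigma]
      rw [e, map_mul, toAdd_mul, List.length_cons]
      push_cast
      omega
  have := this x.toWord
  rwa [FreeGroup.mk_toWord] at this

theorem sigma_phiN (n : ℕ) : (sigma (phiN n ga)).toAdd = Nat.fib (n + 2) ∧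
    (sigma (phiN n gb)).toAdd = Nat.fib (n + 1) := by
  induction n with
  | zero => simp [phiN, sigma]
  | succ n ih =>
    rw [phiN_succ, phiN_succ, phi_a, phi_b, map_mul, map_mul, toAdd_mul]
    have := Nat.fib_add_two (n := n + 1)
    constructor
    · rw [ih.1, ih.2, this]; push_cast; ring
    · exact ih.1

/-- The metric of the Cayley tree twisted by the `n`-th power of the Fibonacci automorphism. -/
def dn (n : ℕ) (x y : F) : ℕ := wd (phiN n x) (phiN n y)

theorem IsTreeMetric.comap {G H : Type*} [Group G] [Group H] {d : H → H → ℕ}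
    (hd : IsTreeMetric d) (f : G →* H) (hf : Function.Bijective f) :
    IsTreeMetric fun x y => d (f x) (f y) where
  self x := hd.self _
  eq_of x y h := hf.1 (hd.eq_of _ _ h)
  symm x y := hd.symm _ _
  tri x y z := hd.tri _ _ _
  inv g x y := by simp only [map_mul, hd.inv]
  four x y z t := hd.four _ _ _ _
  pt x y r hr := by
    obtain ⟨z, h1, h2⟩ := hd.pt (f x) (f y) r hr
    obtain ⟨z, rfl⟩ := hf.2 z
    exact ⟨z, h1, h2⟩
  med x y z := by
    obtain ⟨m, h⟩ := hd.med (f x) (f y) (f z)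
    obtain ⟨m, rfl⟩ := hf.2 m
    exact ⟨m, h⟩

theorem dn_tree (n : ℕ) : IsTreeMetric (dn n) := wd_tree.comap (phiN n) (phiN_bijective n)

/-- The image under `phi` of a path from `p` to `m` passes near every point of the segment
between the images of the endpoints. -/
theorem exists_near (k : ℕ) : ∀ p m m' : F, wd p m = k → Btw wd (phi p) m' (phi m) →
    ∃ z, Btw wd p z m ∧ wd (phi z) m' ≤ 2 := by
  induction k with
  | zero =>
    intro p m m' h hb
    obtain rfl := wd_tree.eq_of _ _ h
    refine ⟨p, by simp [Btw, wd_tree.self], ?_⟩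
    unfold Btw at hb
    rw [wd_tree.self] at hb
    omega
  | succ k ih =>
    intro p m m' h hb
    obtain ⟨q, hq, hqb⟩ := wd_tree.pt p m k (by omega)
    rcases hb.split wd_tree (phi q) with h1 | h1
    · obtain ⟨z, hz, hz'⟩ := ih p q m' hq h1
      exact ⟨z, hz.trans_left wd_tree hqb, hz'⟩
    · refine ⟨m, by simp [Btw, wd_tree.self], ?_⟩
      have := wd_phi_le q m
      rw [wd_symm]
      unfold Btw at h1 hqb
      omega

/-- Bounded cancellation for `phi`. -/
theorem phi_median {x m y m' : F} (h : Btw wd x m y) (h1 : Btw wd (phi x) m' (phi m))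
    (h2 : Btw wd (phi m) m' (phi y)) : wd (phi m) m' ≤ 18 := by
  obtain ⟨z₁, b1, e1⟩ := exists_near _ x m m' rfl h1
  obtain ⟨z₂, b2, e2⟩ := exists_near _ m y m' rfl h2
  have h3 := wd_le_phi z₁ z₂
  have h4 := wd_tree.tri (phi z₁) m' (phi z₂)
  have h5 := wd_symm m' (phi z₂)
  have h6 : wd z₁ m ≤ wd z₁ z₂ := by
    have t1 := wd_tree.tri x z₁ z₂
    have t2 := wd_tree.tri x z₂ y
    unfold Btw at *
    omega
  have h7 := wd_phi_le z₁ m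
  have h8 := wd_tree.tri (phi m) (phi z₁) m'
  have h9 := wd_symm (phi m) (phi z₁)
  omega

/-- Bounded cancellation for the iterates of `phi`. -/
theorem bcc (n : ℕ) : ∀ {x m y : F}, Btw wd x m y →
    dn n x m + dn n m y ≤ dn n x y + 2 * (18 * Nat.fib (n + 3)) := by
  induction n with
  | zero =>
    intro x m y h
    unfold Btw at h
    simp only [dn, phiN, MonoidHom.id_apply]
    omega
  | succ n ih =>
    intro x m y h
    change dn n (phi x) (phi m) + dn n (phi m) (phi y) ≤ dn n (phi x) (phi y) + _
    obtain ⟨m', h1, h2, h3⟩ := wd_tree.med (phi x) (phi m) (phi y)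
    have h4 := phi_median h h1 h2
    have h5 := ih h3
    have h6 : dn n (phi m) m' ≤ Nat.fib (n + 2) * 18 :=
      (wd_phiN_le n _ _).trans (Nat.mul_le_mul_left _ h4)
    have h7 := (dn_tree n).tri (phi x) m' (phi m)
    have h8 := (dn_tree n).tri (phi m) m' (phi y)
    have h9 := (dn_tree n).symm m' (phi m)
    have : Nat.fib (n + 1 + 3) = Nat.fib (n + 2) + Nat.fib (n + 3) := Nat.fib_add_two
    omega

/-- The displacement allowed for the element `w` in the definition of a piece of level `n`. -/
def Mn (n : ℕ) : ℕ := 72 * Nat.fib (n + 3) + Nat.fib (n + 2)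

theorem le_Mn (n : ℕ) : n + 1 ≤ Mn n := by
  have := Nat.le_fib_add_one (n + 2)
  unfold Mn
  omega

theorem fib_le_Mn (n : ℕ) : Nat.fib (n + 2) ≤ Mn n := Nat.le_add_left _ _

theorem Mn_le (n : ℕ) : Mn n ≤ 145 * Nat.fib (n + 2) ∧ Mn n ≤ 290 * Nat.fib (n + 1) := by
  have h1 : Nat.fib (n + 3) = Nat.fib (n + 1) + Nat.fib (n + 2) := Nat.fib_add_two
  have h2 : Nat.fib (n + 2) = Nat.fib n + Nat.fib (n + 1) := Nat.fib_add_two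
  have h3 : Nat.fib n ≤ Nat.fib (n + 1) := Nat.fib_le_fib_succ
  unfold Mn
  omega

theorem bcc' (n : ℕ) {x m y : F} (h : Btw wd x m y) :
    2 * (dn n x m + dn n m y) ≤ 2 * dn n x y + Mn n := by
  have := bcc n h
  unfold Mn
  omega

end Fibonacci


/-! ### Pieces and the coned-off metric -/

section Pieces

/-- The pair `x, y` lies on a segment whose endpoints are moved only a little, for one of the
twisted metrics, by some nontrivial element. -/
def Piece (x y : F) : Prop :=
  ∃ (n : ℕ) (w x' y' : F), w ≠ 1 ∧ Btw wd x' x y' ∧ Btw wd x' y y' ∧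
    dn n x' (w * x') ≤ Mn n ∧ dn n y' (w * y') ≤ Mn n

theorem Btw.left {x y : F} : Btw wd x x y := by simp [Btw, wd_tree.self]

theorem Btw.right {x y : F} : Btw wd x y y := by simp [Btw, wd_tree.self]

theorem Piece.symm {x y : F} (h : Piece x y) : Piece y x := by
  obtain ⟨n, w, x', y', hw, h1, h2, h3, h4⟩ := h
  exact ⟨n, w, x', y', hw, h2, h1, h3, h4⟩

theorem Piece.smul {x y : F} (h : Piece x y) (g : F) : Piece (g * x) (g * y) := by
  obtain ⟨n, w, x', y', hw, h1, h2, h3, h4⟩ := h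
  refine ⟨n, g * w * g⁻¹, g * x', g * y', by simpa using hw, h1.smul wd_tree g,
    h2.smul wd_tree g, ?_, ?_⟩
  · rwa [show g * w * g⁻¹ * (g * x') = g * (w * x') by group, (dn_tree n).inv]
  · rwa [show g * w * g⁻¹ * (g * y') = g * (w * y') by group, (dn_tree n).inv]

theorem Piece.sub {x m y : F} (h : Piece x y) (hm : Btw wd x m y) : Piece x m ∧ Piece m y := by
  obtain ⟨n, w, x', y', hw, h1, h2, h3, h4⟩ := h
  have := h1.convex wd_tree h2 hm
  exact ⟨⟨n, w, x', y', hw, h1, this, h3, h4⟩, ⟨n, w, x', y', hw, this, h2, h3, h4⟩⟩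

/-- Any two points of an orbit of `g` form a piece if `g` commutes with an element moving one of
them a little. -/
theorem Piece.of_commute {n : ℕ} {g w r : F} (hw : w ≠ 1) (hc : g * w = w * g)
    (h : dn n r (w * r) ≤ Mn n) (k : ℕ) : Piece r (g ^ k * r) := by
  refine ⟨n, w, r, g ^ k * r, hw, Btw.left, Btw.right, h, ?_⟩
  have : w * (g ^ k * r) = g ^ k * (w * r) := by
    rw [← mul_assoc, ← mul_assoc, ((show Commute g w from hc).pow_left k).eq]
  rwa [this, (dn_tree n).inv]

theorem Piece.of_wd_eq_one {x y : F} (h : wd x y = 1) : Piece x y := by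
  have := Piece.of_commute (n := 0) (g := y * x⁻¹) (w := y * x⁻¹) (r := x)
    (by rintro e; rw [mul_inv_eq_one] at e; rw [e, wd_tree.self] at h; omega) rfl
    (by
      rw [inv_mul_cancel_right]
      exact (show dn 0 x y = 1 from h).le.trans (le_Mn 0)) 1
  simpa using this

theorem Piece.refl (x : F) : Piece x x := by
  have : wd x (x * ga) = 1 := by simp [wd]
  exact ((Piece.of_wd_eq_one this).sub Btw.left).1

/-- `x` and `y` are joined by a chain of `k` pieces. -/
def Reach : ℕ → F → F → Prop
  | 0, x, y => x = y
  | k + 1, x, y => ∃ z, Reach k x z ∧ Piece z y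

theorem Reach.succ {k : ℕ} {x y : F} (h : Reach k x y) : Reach (k + 1) x y :=
  ⟨y, h, Piece.refl y⟩

theorem Reach.mono_nat {k l : ℕ} (hkl : k ≤ l) {x y : F} (h : Reach k x y) : Reach l x y := by
  induction l, hkl using Nat.le_induction with
  | base => exact h
  | succ l _ ih => exact ih.succ

theorem Reach.trans {k l : ℕ} {x y z : F} (h : Reach k x y) (h' : Reach l y z) :
    Reach (k + l) x z := by
  induction l generalizing z with
  | zero => cases h'; exact h
  | succ l ih =>
    obtain ⟨t, h1, h2⟩ := h'
    exact ⟨t, ih h1, h2⟩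

theorem reach_one {x y : F} : Reach 1 x y ↔ Piece x y :=
  ⟨by rintro ⟨z, rfl, h⟩; exact h, fun h => ⟨x, rfl, h⟩⟩

theorem Reach.symm {k : ℕ} {x y : F} (h : Reach k x y) : Reach k y x := by
  induction k generalizing y with
  | zero => exact Eq.symm h
  | succ k ih =>
    obtain ⟨t, h1, h2⟩ := h
    have := (reach_one.2 h2.symm).trans (ih h1)
    rwa [add_comm] at this

theorem Reach.smul {k : ℕ} {x y : F} (h : Reach k x y) (g : F) : Reach k (g * x) (g * y) := by
  induction k generalizing y with
  | zero => exact congrArg (g * ·) h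
  | succ k ih =>
    obtain ⟨t, h1, h2⟩ := h
    exact ⟨g * t, ih h1, h2.smul g⟩

theorem Reach.of_wd (k : ℕ) : ∀ x y : F, wd x y = k → Reach k x y := by
  induction k with
  | zero => exact fun x y h => wd_tree.eq_of _ _ h
  | succ k ih =>
    intro x y h
    obtain ⟨z, h1, h2⟩ := wd_tree.pt x y k (by omega)
    exact ⟨z, ih x z h1, Piece.of_wd_eq_one (by unfold Btw at h2; omega)⟩

theorem Reach.sub {k : ℕ} {x m y : F} (h : Reach k x y) (hm : Btw wd x m y) : Reach k x m := by
  induction k generalizing m y with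
  | zero =>
    cases h
    unfold Btw at hm
    rw [wd_tree.self] at hm
    exact wd_tree.eq_of _ _ (by omega)
  | succ k ih =>
    obtain ⟨z, h1, h2⟩ := h
    rcases hm.split wd_tree z with h | h
    · exact (ih h1 h).succ
    · exact ⟨z, h1, (h2.sub h).1⟩

theorem Reach.add {k : ℕ} {x m y : F} (h : Reach k x y) (hm : Btw wd x m y) :
    ∃ i j, i + j ≤ k + 1 ∧ Reach i x m ∧ Reach j m y := by
  induction k generalizing m y with
  | zero => exact ⟨0, 0, by omega, h.sub hm, by
      have h1 := h.sub hm
      exact Eq.trans (Eq.symm h1) h⟩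
  | succ k ih =>
    obtain ⟨z, h1, h2⟩ := h
    rcases hm.split wd_tree z with h | h
    · obtain ⟨i, j, hij, a, b⟩ := ih h1 h
      exact ⟨i, j + 1, by omega, a, ⟨z, b, h2⟩⟩
    · exact ⟨k + 1, 1, by omega, ⟨z, h1, (h2.sub h).1⟩, reach_one.2 (h2.sub h).2⟩

open Classical in
/-- The coned-off metric: the length of a shortest chain of pieces from `x` to `y`. -/
def Dp (x y : F) : ℕ := Nat.find (p := fun k => Reach k x y) ⟨_, Reach.of_wd _ x y rfl⟩

theorem Dp_le_iff {x y : F} {k : ℕ} : Dp x y ≤ k ↔ Reach k x y := by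
  classical
  unfold Dp
  rw [Nat.find_le_iff]
  exact ⟨fun ⟨m, h1, h2⟩ => h2.mono_nat h1, fun h => ⟨k, le_rfl, h⟩⟩

theorem reach_Dp (x y : F) : Reach (Dp x y) x y := Dp_le_iff.1 le_rfl

theorem Dp_le_one {x y : F} (h : Piece x y) : Dp x y ≤ 1 := Dp_le_iff.2 (reach_one.2 h)

theorem Dp_additive : IsCoarselyAdditive wd Dp where
  symm x y := le_antisymm (Dp_le_iff.2 (reach_Dp y x).symm) (Dp_le_iff.2 (reach_Dp x y).symm)
  tri x y z := Dp_le_iff.2 ((reach_Dp x y).trans (reach_Dp y z))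
  inv g x y := by
    refine le_antisymm (Dp_le_iff.2 ((reach_Dp x y).smul g)) (Dp_le_iff.2 ?_)
    have := (reach_Dp (g * x) (g * y)).smul g⁻¹
    rwa [inv_mul_cancel_left, inv_mul_cancel_left] at this
  mono x m y h := Dp_le_iff.2 ((reach_Dp x y).sub h)
  self x := Nat.le_zero.1 (Dp_le_iff.2 rfl)
  add x m y h := by
    obtain ⟨i, j, hij, h1, h2⟩ := (reach_Dp x y).add h
    have := Dp_le_iff.2 h1
    have := Dp_le_iff.2 h2
    omega
  le x y := Dp_le_iff.2 (Reach.of_wd _ x y rfl)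

theorem Dp_eq_of {x y : F} (h : Dp x y = 0) : x = y := Dp_le_iff.1 h.le

/-- The four point inequality for the coned-off metric: the median of three of the points lies
on a segment joining two of them and on a segment joining the fourth point to the third. -/
theorem Dp_four (x y z t : F) :
    Dp x z + Dp y t ≤ max (Dp x y + Dp z t) (Dp y z + Dp x t) + 2 := by
  obtain ⟨m, h1, h2, h3⟩ := wd_tree.med x y z
  have t1 := Dp_additive.tri x m z
  have t2 := Dp_additive.tri y m t
  have s1 := Dp_additive.symm y m
  have s2 := Dp_additive.symm t m
  have s3 := Dp_additive.symm z t
  rcases h3.split wd_tree t with h | h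
  · have := Dp_additive.add _ _ _ h
    have := Dp_additive.add _ _ _ h2
    have := le_max_right (Dp x y + Dp z t) (Dp y z + Dp x t)
    omega
  · have := Dp_additive.add _ _ _ h
    have := Dp_additive.add _ _ _ h1
    have := le_max_left (Dp x y + Dp z t) (Dp y z + Dp x t)
    omega

/-- If `w` moves the endpoints of a segment a little, then it moves every point of it a little. -/
theorem displacement {n : ℕ} {w x y m : F} (hx : dn n x (w * x) ≤ Mn n)
    (hy : dn n y (w * y) ≤ Mn n) (hm : Btw wd x m y) : dn n m (w * m) ≤ 4 * Mn n := by
  have hd := dn_tree n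
  have h1 := hd.four m (w * m) x (w * y)
  have h2 := bcc' n hm
  have h3 := hd.tri x (w * y) y
  have h4 := hd.tri m y (w * y)
  have h5 := hd.tri (w * m) (w * x) x
  rw [hd.inv] at h1 h5
  have := hd.symm x m
  have := hd.symm y (w * y)
  have := hd.symm x (w * x)
  rcases le_max_iff.1 h1 with h | h <;> omega

/-- If `40` steps of `g` along an axis form a piece, then the orbits of `g` are bounded: either
`g` itself moves the axis a little, or the element defining the piece commutes with `g`. -/
theorem Dp_key (g r : F) (hg : g ≠ 1) (hax : ∀ i ≤ 40, wd r (g ^ i * r) = i * wd r (g * r))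
    (h1 : Dp r (g ^ 40 * r) ≤ 1) (k : ℕ) : Dp r (g ^ k * r) ≤ 3 := by
  obtain ⟨n, w, x', y', hw, b1, b2, e1, e2⟩ := reach_one.1 (Dp_le_iff.1 h1)
  by_cases hρ : dn n r (g * r) ≤ Mn n
  · exact (Dp_le_one (Piece.of_commute hg rfl hρ k)).trans (by omega)
  push Not at hρ
  have hd := dn_tree n
  -- bounded cancellation: `g` still translates by a definite amount for the twisted metric
  have hlong : ∀ i ≤ 40, i * dn n r (g * r) ≤ 2 * dn n r (g ^ i * r) := by
    intro i
    induction i with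
    | zero => intro _; simp
    | succ i ih =>
      intro hi
      have ih := ih (by omega)
      have e : g ^ (i + 1) * r = g ^ i * (g * r) := by rw [pow_succ, mul_assoc]
      have hb : Btw wd r (g ^ i * r) (g ^ (i + 1) * r) := by
        unfold Btw
        rw [hax i (by omega), hax (i + 1) hi, e, wd_inv]
        ring
      have := bcc' n hb
      rw [e, hd.inv] at this
      rw [e, add_mul]
      omega
  have hl := hlong 40 le_rfl
  have hM := le_Mn n
  have hc : g * w = w * g := by
    refine commute_of_small hd (x := r) (y := g ^ 40 * r) (c := 4 * dn n r (g * r))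
      (by omega) ?_ ((displacement e1 e2 b1).trans (by omega))
      ((displacement e1 e2 b2).trans (by omega)) (by omega)
    have e : g * (g ^ 40 * r) = g ^ 40 * (g * r) := by
      rw [← mul_assoc, ← mul_assoc, (Commute.self_pow g 40).eq]
    rw [e, hd.inv]
    omega
  have c1 : Dp r x' ≤ 1 := Dp_le_one ⟨n, w, x', y', hw, b1, Btw.left, e1, e2⟩
  have c2 := Dp_le_one (Piece.of_commute hw hc e1 k)
  have c3 := Dp_additive.inv (g ^ k) x' r
  have c4 := Dp_additive.symm x' r
  have c5 := Dp_additive.tri r x' (g ^ k * r)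
  have c6 := Dp_additive.tri x' (g ^ k * x') (g ^ k * r)
  omega

theorem norm_pow_le (x : F) (k : ℕ) : (x ^ k).norm ≤ k * x.norm := by
  induction k with
  | zero => simp
  | succ k ih =>
    have := FreeGroup.norm_mul_le (x ^ k) x
    rw [pow_succ, add_mul]
    omega

theorem le_norm_of_sigma {x : F} {k : ℕ} (h : (sigma x).toAdd = k) : k ≤ x.norm := by
  have := sigma_le x
  omega

theorem sigma_of (i : Bool) : (sigma (FreeGroup.of i)).toAdd = 1 := by simp [sigma]

theorem norm_phiN_pow_ge (n k : ℕ) : k * Nat.fib (n + 2) ≤ (phiN n (ga ^ k)).norm ∧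
    k * Nat.fib (n + 1) ≤ (phiN n (gb ^ k)).norm := by
  constructor
  all_goals
    apply le_norm_of_sigma
    rw [map_pow, map_pow, toAdd_pow]
  · rw [(sigma_phiN n).1]; simp
  · rw [(sigma_phiN n).2]; simp

/-- A family of elements whose powers, for large `L`, escape to infinity in the coned-off metric. -/
def vv (L : ℕ) : F := ga ^ L * gb ^ L

theorem norm_vv_pow (L k : ℕ) : (vv L ^ k).norm = 2 * L * k := by
  apply le_antisymm
  · have h1 := norm_pow_le (vv L) k
    have h2 : (vv L).norm ≤ 2 * L := by
      have := FreeGroup.norm_mul_le (ga ^ L) (gb ^ L)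
      rw [FreeGroup.norm_of_pow, FreeGroup.norm_of_pow] at this
      rw [vv]; omega
    rw [mul_comm (2 * L)]
    exact h1.trans (Nat.mul_le_mul_left k h2)
  · apply le_norm_of_sigma
    rw [map_pow sigma, toAdd_pow, vv, map_mul sigma, toAdd_mul, map_pow sigma, map_pow sigma,
      toAdd_pow, toAdd_pow, sigma_of, sigma_of]
    push_cast
    simp
    ring

/-- An element defining a piece that contains `1` and `a ^ L * b ^ L` would move these points and
`a ^ L` a little for some twisted metric, hence commute with `a` and with a conjugate of `b` by a power
of `a`; it would be central. The threshold `5000` makes the segments long compared to `Mn n`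
for every `n` at once. -/
theorem not_piece_vv {L : ℕ} (hL : 5000 ≤ L) : ¬ Piece 1 (vv L) := by
  rintro ⟨n, w, x', y', hw, b1, b2, e1, e2⟩
  apply hw
  have hd := dn_tree n
  have hM := Mn_le n
  have hM' := fib_le_Mn n
  have hpos : 0 < Nat.fib (n + 1) := Nat.fib_pos.2 (by omega)
  have hmono : Nat.fib (n + 1) ≤ Nat.fib (n + 2) := Nat.fib_le_fib_succ
  have hnorm := norm_phiN_le n
  have hge := norm_phiN_pow_ge n L
  have hL1 := Nat.mul_le_mul_right (Nat.fib (n + 2)) hL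
  have hL2 := Nat.mul_le_mul_right (Nat.fib (n + 1)) hL
  have done1 : ∀ x, dn n 1 x = (phiN n x).norm := fun x => by simp [dn, one_wd]
  have hb : Btw wd 1 (ga ^ L) (vv L) := by
    have h1 : wd (ga ^ L) (vv L) = L := by
      rw [wd, vv, inv_mul_cancel_left, FreeGroup.norm_of_pow]
    have h2 := norm_vv_pow L 1
    rw [pow_one] at h2
    unfold Btw
    rw [h1, one_wd, one_wd, h2, FreeGroup.norm_of_pow]
    omega
  have bm := b1.convex wd_tree b2 hb
  have w1 := displacement e1 e2 b1
  have w2 := displacement e1 e2 bm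
  have w3 := displacement e1 e2 b2
  have ca : ga * w = w * ga := by
    refine commute_of_small hd (x := 1) (y := ga ^ L) (c := 4 * Mn n) ?_ ?_ w1 w2 ?_
    · rw [mul_one, done1]; omega
    · have : dn n (ga ^ L) (ga * ga ^ L) = dn n 1 ga := by
        rw [← pow_succ', pow_succ, ← hd.inv (ga ^ L) 1 ga, mul_one]
      rw [this, done1]; omega
    · rw [done1]; omega
  have hstep : ∀ z, dn n z (z * gb) = (phiN n gb).norm := fun z => by
    rw [← done1, ← hd.inv z 1 gb, mul_one]
  have cb : ga ^ L * gb * (ga ^ L)⁻¹ * w = w * (ga ^ L * gb * (ga ^ L)⁻¹) := by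
    refine commute_of_small hd (x := ga ^ L) (y := vv L) (c := 4 * Mn n) ?_ ?_ w2 w3 ?_
    · rw [inv_mul_cancel_right, hstep]; omega
    · have : ga ^ L * gb * (ga ^ L)⁻¹ * vv L = vv L * gb := by
        rw [vv, mul_assoc, inv_mul_cancel_left, mul_assoc, mul_assoc, ← pow_succ', ← pow_succ]
      rw [this, hstep]; omega
    · have : dn n (ga ^ L) (vv L) = dn n 1 (gb ^ L) := by
        rw [vv, ← hd.inv (ga ^ L) 1, mul_one]
      rw [this, done1]; omega
  have cA : Commute (ga ^ L) w := (show Commute ga w from ca).pow_left _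
  have cB : Commute gb w := by
    have := (cA.inv_left.mul_left (show Commute _ w from cb)).mul_left cA
    rwa [show (ga ^ L)⁻¹ * (ga ^ L * gb * (ga ^ L)⁻¹) * ga ^ L = gb by group] at this
  exact eq_one_of_commute (by rintro (_ | _) <;> [exact cB.eq; exact ca])

theorem le_Dp_vv {L : ℕ} (hL : 5000 ≤ L) (k : ℕ) : k ≤ Dp 1 (vv L ^ k) := by
  have hv : 2 ≤ Dp 1 (vv L) := by
    by_contra h
    exact not_piece_vv hL (reach_one.1 (Dp_le_iff.1 (by omega)))
  induction k with
  | zero => simp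
  | succ k ih =>
    have e : vv L ^ (k + 1) = vv L ^ k * vv L := pow_succ _ _
    have hb : Btw wd 1 (vv L ^ k) (vv L ^ (k + 1)) := by
      have h1 := norm_vv_pow L 1
      rw [pow_one] at h1
      unfold Btw
      rw [one_wd, one_wd, norm_vv_pow, norm_vv_pow, e, wd, inv_mul_cancel_left, h1]
      ring
    have h1 := Dp_additive.add _ _ _ hb
    have h2 := Dp_additive.inv (vv L ^ k) 1 (vv L)
    rw [mul_one, ← e] at h2
    omega

/-- An element that `phi ^ n` maps into the ball of radius `n` defines, at level `n`, a piece
containing the whole orbit of `1` under its powers. -/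
theorem Dp_pow_le {n : ℕ} {g : F} (h : (phiN n g).norm ≤ n) (k : ℕ) : Dp 1 (g ^ k) ≤ 1 := by
  by_cases hg : g = 1
  · subst hg
    rw [one_pow, Dp_additive.self]; omega
  · have := Piece.of_commute (n := n) (r := 1) (k := k) hg rfl (by
      have := le_Mn n
      have : dn n 1 g = (phiN n g).norm := by simp [dn, one_wd]
      rw [mul_one]; omega)
    rw [mul_one] at this
    exact Dp_le_one this

end Pieces


/-! ### Geometric realization -/

section Realization

/-- The coned-off metric with real values. -/
def Dr (x y : F) : ℝ := Dp x y

theorem Dr_self (x : F) : Dr x x = 0 := by simp [Dr, Dp_additive.self]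
theorem Dr_comm (x y : F) : Dr x y = Dr y x := by simp [Dr, Dp_additive.symm x y]
theorem Dr_tri (x y z : F) : Dr x z ≤ Dr x y + Dr y z := by
  unfold Dr; exact_mod_cast Dp_additive.tri x y z
theorem Dr_smul (g x y : F) : Dr (g * x) (g * y) = Dr x y := by simp [Dr, Dp_additive.inv]

/-- A point at distance `t` from `u` on the edge from `u` to `v`. Edges are oriented, and there
are degenerate edges from a vertex to itself; the points that have to be identified are at
pseudo-distance zero. -/
@[ext]
structure Pt where
  /-- the origin of the edge -/
  u : F
  /-- the end of the edge -/
  v : F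
  /-- the distance from the origin -/
  t : ℝ
  le_one : Dr u v ≤ 1
  nonneg : 0 ≤ t
  le : t ≤ Dr u v

namespace Pt

/-- The distance from a point of the realization to a vertex. -/
def h (p : Pt) (z : F) : ℝ := min (p.t + Dr p.u z) (Dr p.u p.v - p.t + Dr p.v z)

theorem h_tri (p : Pt) (z z' : F) : p.h z ≤ p.h z' + Dr z' z := by
  have h1 := Dr_tri p.u z' z
  have h2 := Dr_tri p.v z' z
  unfold h
  rcases min_choice (p.t + Dr p.u z') (Dr p.u p.v - p.t + Dr p.v z') with e | e <;> rw [e]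
  · exact (min_le_left _ _).trans (by linarith)
  · exact (min_le_right _ _).trans (by linarith)

theorem le_h_add (p : Pt) (z z' : F) : Dr z z' ≤ p.h z + p.h z' := by
  have h1 := Dr_tri z p.u z'
  have h2 := Dr_tri z p.v z'
  have h3 := Dr_tri z p.u p.v
  have h4 := Dr_tri z p.v p.u
  have h5 := Dr_tri z p.v z'
  have h6 := Dr_tri p.u p.v z'
  have h7 := Dr_tri p.v p.u z'
  have := Dr_comm z p.u
  have := Dr_comm z p.v
  have := Dr_comm p.v p.u
  have := p.nonneg
  have := p.le
  unfold h
  rcases min_choice (p.t + Dr p.u z) (Dr p.u p.v - p.t + Dr p.v z) with e | e <;> rw [e] <;>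
  rcases min_choice (p.t + Dr p.u z') (Dr p.u p.v - p.t + Dr p.v z') with e | e <;> rw [e] <;>
  linarith

theorem h_u (p : Pt) : p.h p.u = p.t := by
  have := p.le
  unfold h
  rw [Dr_self, add_zero, Dr_comm p.v, min_eq_left]
  linarith

theorem h_v (p : Pt) : p.h p.v = Dr p.u p.v - p.t := by
  have := p.nonneg
  unfold h
  rw [Dr_self, add_zero, min_eq_right]
  linarith

/-- The length of a shortest path from `p` to `q` through some vertex. -/
def via (p q : Pt) : ℝ := min (p.t + q.h p.u) (Dr p.u p.v - p.t + q.h p.v)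

theorem via_le (p q : Pt) (z : F) : p.via q ≤ p.h z + q.h z := by
  have h1 := q.h_tri p.u z
  have h2 := q.h_tri p.v z
  rw [Dr_comm] at h1 h2
  unfold via
  have e0 : p.h z = min (p.t + Dr p.u z) (Dr p.u p.v - p.t + Dr p.v z) := rfl
  rw [e0]
  rcases min_choice (p.t + Dr p.u z) (Dr p.u p.v - p.t + Dr p.v z) with e | e <;> rw [e]
  · exact (min_le_left _ _).trans (by linarith)
  · exact (min_le_right _ _).trans (by linarith)

theorem exists_via (p q : Pt) : ∃ z, (z = p.u ∨ z = p.v) ∧ p.via q = p.h z + q.h z := by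
  unfold via
  rcases min_choice (p.t + q.h p.u) (Dr p.u p.v - p.t + q.h p.v) with e | e <;> rw [e]
  · exact ⟨p.u, Or.inl rfl, by rw [h_u]⟩
  · exact ⟨p.v, Or.inr rfl, by rw [h_v]⟩

theorem via_comm (p q : Pt) : p.via q = q.via p := by
  have : ∀ p q : Pt, p.via q ≤ q.via p := fun p q => by
    obtain ⟨z, -, e⟩ := exists_via q p
    rw [e, add_comm]
    exact via_le p q z
  exact le_antisymm (this p q) (this q p)

open Classical in
/-- The path pseudo-metric of the realization. -/
def pd (p q : Pt) : ℝ := if p.u = q.u ∧ p.v = q.v then |p.t - q.t| else p.via q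

theorem pd_le_via (p q : Pt) : p.pd q ≤ p.via q := by
  unfold pd
  split_ifs with hpq
  · obtain ⟨z, -, e⟩ := exists_via p q
    rw [e, h, h, ← hpq.1, ← hpq.2]
    have h1 := Dr_tri p.u z p.v
    have h2 := Dr_tri p.u p.v z
    have h3 := Dr_tri p.v p.u z
    have := Dr_comm z p.v
    have := Dr_comm p.v p.u
    have := p.nonneg
    have := p.le
    have := q.nonneg
    have h4 := q.le
    rw [← hpq.1, ← hpq.2] at h4
    have h5 := Dr_tri p.u z p.u
    have h6 := Dr_tri p.v z p.v
    rw [Dr_self, Dr_comm z] at h5 h6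
    rw [abs_le]
    rcases min_choice (p.t + Dr p.u z) (Dr p.u p.v - p.t + Dr p.v z) with e | e <;> rw [e] <;>
    rcases min_choice (q.t + Dr p.u z) (Dr p.u p.v - q.t + Dr p.v z) with e | e <;> rw [e] <;>
    constructor <;> linarith
  · exact le_rfl

theorem pd_comm (p q : Pt) : p.pd q = q.pd p := by
  unfold pd
  rw [via_comm p q, abs_sub_comm]
  simp only [eq_comm]

theorem h_le_pd (p q : Pt) (z : F) : p.h z ≤ p.pd q + q.h z := by
  unfold pd
  split_ifs with hpq
  · have h1 := le_abs_self (p.t - q.t)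
    have h2 := neg_abs_le (p.t - q.t)
    rw [h, h, ← hpq.1, ← hpq.2]
    rcases min_choice (q.t + Dr p.u z) (Dr p.u p.v - q.t + Dr p.v z) with e | e <;> rw [e]
    · exact (min_le_left _ _).trans (by linarith)
    · exact (min_le_right _ _).trans (by linarith)
  · obtain ⟨z', -, e⟩ := exists_via p q
    have h1 := p.h_tri z z'
    have h2 := q.le_h_add z' z
    linarith

theorem pd_tri_of (p q r : Pt) (hpq : ¬ (p.u = q.u ∧ p.v = q.v)) : p.pd r ≤ p.pd q + q.pd r := by
  obtain ⟨z, -, e⟩ := exists_via p q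
  have h1 := via_le p r z
  have h2 := pd_le_via p r
  have h3 := h_le_pd r q z
  rw [pd_comm r q] at h3
  have h4 : p.pd q = p.via q := if_neg hpq
  linarith

instance : PseudoMetricSpace Pt where
  dist := pd
  dist_self p := by simp [pd]
  dist_comm := pd_comm
  dist_triangle p q r := by
    by_cases hpq : p.u = q.u ∧ p.v = q.v
    · by_cases hqr : r.u = q.u ∧ r.v = q.v
      · have h1 : p.pd r = |p.t - r.t| := if_pos ⟨hpq.1.trans hqr.1.symm, hpq.2.trans hqr.2.symm⟩
        have h2 : p.pd q = |p.t - q.t| := if_pos hpq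
        have h3 : q.pd r = |q.t - r.t| := if_pos ⟨hqr.1.symm, hqr.2.symm⟩
        rw [h1, h2, h3]
        exact abs_sub_le _ _ _
      · have := pd_tri_of r q p hqr
        rw [pd_comm r p, pd_comm r q, pd_comm q p] at this
        linarith
    · exact pd_tri_of p q r hpq

theorem dist_def (p q : Pt) : dist p q = p.pd q := rfl

instance : MulAction F Pt where
  smul g p := ⟨g * p.u, g * p.v, p.t, by rw [Dr_smul]; exact p.le_one, p.nonneg,
    by rw [Dr_smul]; exact p.le⟩
  one_smul p := by ext <;> simp [HSMul.hSMul]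
  mul_smul g g' p := by ext <;> simp [HSMul.hSMul, mul_assoc]

theorem smul_u (g : F) (p : Pt) : (g • p).u = g * p.u := rfl
theorem smul_v (g : F) (p : Pt) : (g • p).v = g * p.v := rfl
theorem smul_t (g : F) (p : Pt) : (g • p).t = p.t := rfl

theorem dist_smul (g : F) (p q : Pt) : dist (g • p) (g • q) = dist p q := by
  simp only [dist_def, pd, via, h, smul_u, smul_v, smul_t, Dr_smul, mul_right_inj]

instance : IsIsometricSMul F Pt := ⟨fun g => Isometry.of_dist_eq (dist_smul g)⟩

/-- The vertex `z` as a point of the realization. -/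
def vtx (z : F) : Pt := ⟨z, z, 0, by rw [Dr_self]; exact zero_le_one, le_rfl, by rw [Dr_self]⟩

theorem smul_vtx (g z : F) : g • vtx z = vtx (g * z) := rfl

theorem dist_vtx (p : Pt) (z : F) : dist p (vtx z) = p.h z := by
  have hv : ∀ y, (vtx z).h y = Dr z y := fun y => by simp [h, vtx, Dr_self]
  rw [dist_def, pd]
  split_ifs with hp
  · obtain ⟨h1, h2⟩ := hp
    have h1 : p.u = z := h1
    have h2 : p.v = z := h2
    have := p.le
    have := p.nonneg
    have e := p.h_u
    rw [h1] at e
    rw [e]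
    simp [vtx, abs_of_nonneg p.nonneg]
  · rw [via, hv, hv, h, Dr_comm z, Dr_comm z]

theorem dist_vtx_vtx (x y : F) : dist (vtx x) (vtx y) = Dr x y := by
  rw [dist_vtx]; simp [h, vtx, Dr_self]

theorem dist_u_le (p : Pt) : dist p (vtx p.u) ≤ 1 := by
  rw [dist_vtx, h_u]; exact p.le.trans p.le_one

end Pt

/-- The metric space on which the group acts. -/
abbrev Rz : Type := SeparationQuotient Pt

/-- A point of the realization, as an element of the metric quotient. -/
abbrev cl (p : Pt) : Rz := SeparationQuotient.mk p

theorem dist_cl (p q : Pt) : dist (cl p) (cl q) = dist p q := SeparationQuotient.dist_mk p q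

/-- There is a geodesic from `x` to `y`. -/
def Geo {X : Type*} [MetricSpace X] (x y : X) : Prop :=
  ∃ f : ℝ → X, f 0 = x ∧ f (dist x y) = y ∧
    ∀ s ∈ Set.Icc (0 : ℝ) (dist x y), ∀ t ∈ Set.Icc (0 : ℝ) (dist x y),
      dist (f s) (f t) = |s - t|

theorem Geo.symm {X : Type*} [MetricSpace X] {x y : X} (h : Geo x y) : Geo y x := by
  obtain ⟨f, h0, h1, hf⟩ := h
  refine ⟨fun s => f (dist x y - s), by simpa using h1, by simp [dist_comm y x, h0], ?_⟩
  intro s hs t ht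
  rw [dist_comm y x] at hs ht
  rw [hf _ ⟨by linarith [hs.2], by linarith [hs.1]⟩ _ ⟨by linarith [ht.2], by linarith [ht.1]⟩,
    abs_sub_comm]
  congr 1
  ring

theorem Geo.trans {X : Type*} [MetricSpace X] {x y z : X} (h : Geo x y) (h' : Geo y z)
    (hd : dist x z = dist x y + dist y z) : Geo x z := by
  obtain ⟨f, f0, f1, hf⟩ := h
  obtain ⟨g, g0, g1, hg⟩ := h'
  have n1 : 0 ≤ dist x y := dist_nonneg
  have n2 : 0 ≤ dist y z := dist_nonneg
  have hmix : ∀ s ∈ Set.Icc (0 : ℝ) (dist x z), ∀ t ∈ Set.Icc (0 : ℝ) (dist x z),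
      s ≤ dist x y → ¬ t ≤ dist x y → dist (f s) (g (t - dist x y)) = t - s := by
    intro s hs t ht h1 h2
    push Not at h2
    have a1 := hf 0 ⟨le_rfl, n1⟩ s ⟨hs.1, h1⟩
    have a2 := hf s ⟨hs.1, h1⟩ (dist x y) ⟨n1, le_rfl⟩
    have b1 := hg 0 ⟨le_rfl, n2⟩ (t - dist x y) ⟨by linarith, by linarith [ht.2]⟩
    have b2 := hg (t - dist x y) ⟨by linarith, by linarith [ht.2]⟩ (dist y z) ⟨n2, le_rfl⟩
    rw [f0, abs_of_nonpos (by linarith [hs.1])] at a1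
    rw [f1, abs_of_nonpos (by linarith [hs.1])] at a2
    rw [g0, abs_of_nonpos (by linarith)] at b1
    rw [g1, abs_of_nonpos (by linarith [ht.2])] at b2
    have t1 := dist_triangle (f s) y (g (t - dist x y))
    have t2 := dist_triangle4 x (f s) (g (t - dist x y)) z
    linarith
  refine ⟨fun s => if s ≤ dist x y then f s else g (s - dist x y), ?_, ?_, ?_⟩
  · simp [n1, f0]
  · simp only
    split_ifs with hle
    · have e : dist y z = 0 := by linarith
      rw [hd, e, add_zero, f1]
      exact dist_eq_zero.1 e
    · rw [hd, add_sub_cancel_left, g1]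
  · intro s hs t ht
    simp only
    split_ifs with h1 h2 h2
    · exact hf s ⟨hs.1, h1⟩ t ⟨ht.1, h2⟩
    · rw [hmix s hs t ht h1 h2, abs_of_nonpos (by linarith)]; ring
    · rw [dist_comm, hmix t ht s hs h2 h1, abs_of_nonneg (by linarith)]
    · rw [hg _ ⟨by linarith, by linarith [hs.2]⟩ _ ⟨by linarith, by linarith [ht.2]⟩]
      congr 1
      ring

theorem geo_edge (p q : Pt) (hu : p.u = q.u) (hv : p.v = q.v) : Geo (cl p) (cl q) := by
  have key : ∀ p q : Pt, p.u = q.u → p.v = q.v → p.t ≤ q.t → Geo (cl p) (cl q) := by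
    intro p q hu hv hle
    have hd : dist (cl p) (cl q) = q.t - p.t := by
      rw [dist_cl, Pt.dist_def, Pt.pd, if_pos ⟨hu, hv⟩, abs_of_nonpos (by linarith)]; ring
    have hq : q.t ≤ Dr p.u p.v := by rw [hu, hv]; exact q.le
    classical
    refine ⟨fun s => if hs : 0 ≤ s ∧ s ≤ q.t - p.t then
      cl ⟨p.u, p.v, p.t + s, p.le_one, by linarith [p.nonneg, hs.1], by linarith [hs.2]⟩
      else cl p, ?_, ?_, ?_⟩
    · beta_reduce
      rw [dif_pos ⟨le_rfl, by linarith⟩]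
      congr 1
      ext <;> simp
    · have hh : 0 ≤ dist (cl p) (cl q) ∧ dist (cl p) (cl q) ≤ q.t - p.t := by
        rw [hd]; exact ⟨by linarith, le_rfl⟩
      beta_reduce
      rw [dif_pos hh]
      congr 1
      ext
      · exact hu
      · exact hv
      · simp [hd]
    · intro s hs t ht
      rw [hd] at hs ht
      beta_reduce
      rw [dif_pos ⟨hs.1, hs.2⟩, dif_pos ⟨ht.1, ht.2⟩, dist_cl, Pt.dist_def, Pt.pd,
        if_pos ⟨rfl, rfl⟩]
      congr 1
      ring
  rcases le_total p.t q.t with h | h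
  · exact key p q hu hv h
  · exact (key q p hu.symm hv.symm h).symm

theorem geo_end (p : Pt) (z : F) (hz : z = p.u ∨ z = p.v) : Geo (cl p) (cl (Pt.vtx z)) := by
  have n := p.nonneg.trans p.le
  rcases hz with rfl | rfl
  · have := geo_edge p ⟨p.u, p.v, 0, p.le_one, le_rfl, n⟩ rfl rfl
    convert this using 1
    refine dist_eq_zero.1 ?_
    rw [dist_comm, dist_cl, Pt.dist_vtx]
    exact Pt.h_u ⟨p.u, p.v, 0, p.le_one, le_rfl, n⟩
  · have := geo_edge p ⟨p.u, p.v, Dr p.u p.v, p.le_one, n, le_rfl⟩ rfl rfl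
    convert this using 1
    refine dist_eq_zero.1 ?_
    rw [dist_comm, dist_cl, Pt.dist_vtx]
    exact (Pt.h_v ⟨p.u, p.v, Dr p.u p.v, p.le_one, n, le_rfl⟩).trans (sub_self _)

theorem geo_vtx (k : ℕ) : ∀ x y : F, Dp x y = k → Geo (cl (Pt.vtx x)) (cl (Pt.vtx y)) := by
  induction k with
  | zero =>
    intro x y h
    rw [Dp_eq_of h]
    exact geo_edge _ _ rfl rfl
  | succ k ih =>
    intro x y h
    obtain ⟨z, h1, h2⟩ : Reach (k + 1) x y := Dp_le_iff.1 h.le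
    have h1 := Dp_le_iff.2 h1
    have h2 := Dp_le_one h2
    have h3 := Dp_additive.tri x z y
    have hzy : Dr z y ≤ 1 := by unfold Dr; exact_mod_cast h2
    have nzy : 0 ≤ Dr z y := Nat.cast_nonneg _
    refine (ih x z (by omega)).trans (y := cl (Pt.vtx z)) ?_ ?_
    · have := geo_end ⟨z, y, 0, hzy, le_rfl, nzy⟩ y (Or.inr rfl)
      convert this using 1
      refine dist_eq_zero.1 ?_
      rw [dist_comm, dist_cl, Pt.dist_vtx]
      exact Pt.h_u ⟨z, y, 0, hzy, le_rfl, nzy⟩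
    · simp only [dist_cl, Pt.dist_vtx_vtx, Dr]
      norm_cast
      omega

theorem geo_pt_vtx (p : Pt) (z : F) : Geo (cl p) (cl (Pt.vtx z)) := by
  have hu := geo_end p p.u (Or.inl rfl)
  have hv := geo_end p p.v (Or.inr rfl)
  have e : dist (cl p) (cl (Pt.vtx z)) = p.h z := by rw [dist_cl, Pt.dist_vtx]
  rcases min_choice (p.t + Dr p.u z) (Dr p.u p.v - p.t + Dr p.v z) with h | h
  · refine hu.trans (geo_vtx _ _ _ rfl) ?_
    rw [e, dist_cl, dist_cl, Pt.dist_vtx_vtx, Pt.dist_vtx, Pt.h_u, Pt.h, h]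
  · refine hv.trans (geo_vtx _ _ _ rfl) ?_
    rw [e, dist_cl, dist_cl, Pt.dist_vtx_vtx, Pt.dist_vtx, Pt.h_v, Pt.h, h]

theorem Rz_geodesic : IsGeodesicSpace Rz := by
  intro x y
  obtain ⟨p, rfl⟩ := SeparationQuotient.surjective_mk x
  obtain ⟨q, rfl⟩ := SeparationQuotient.surjective_mk y
  change Geo (cl p) (cl q)
  by_cases hpq : p.u = q.u ∧ p.v = q.v
  · exact geo_edge p q hpq.1 hpq.2
  · obtain ⟨z, hz, e⟩ := Pt.exists_via p q
    refine (geo_end p z hz).trans (geo_pt_vtx q z).symm ?_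
    rw [dist_comm (cl (Pt.vtx z)), dist_cl, dist_cl, dist_cl, Pt.dist_vtx, Pt.dist_vtx, ← e,
      Pt.dist_def, Pt.pd, if_neg hpq]

theorem exists_vtx (x : Rz) : ∃ u : F, dist x (cl (Pt.vtx u)) ≤ 1 := by
  obtain ⟨p, rfl⟩ := SeparationQuotient.surjective_mk x
  exact ⟨p.u, (dist_cl _ _).le.trans p.dist_u_le⟩

theorem dist_cl_vtx (x y : F) : dist (cl (Pt.vtx x)) (cl (Pt.vtx y)) = Dp x y := by
  rw [dist_cl, Pt.dist_vtx_vtx, Dr]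

theorem abs_dist_sub_Dp_le {x y : Rz} {u v : F} (hu : dist x (cl (Pt.vtx u)) ≤ 1)
    (hv : dist y (cl (Pt.vtx v)) ≤ 1) : dist x y ≤ Dp u v + 2 ∧ (Dp u v : ℝ) ≤ dist x y + 2 := by
  rw [← dist_cl_vtx]
  have h1 := dist_triangle4 x (cl (Pt.vtx u)) (cl (Pt.vtx v)) y
  have h2 := dist_triangle4 (cl (Pt.vtx u)) x y (cl (Pt.vtx v))
  have h3 := dist_comm (cl (Pt.vtx v)) y
  have h4 := dist_comm (cl (Pt.vtx u)) x
  constructor <;> linarith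

theorem Rz_hyperbolic : IsDeltaHyperbolic Rz 10 := by
  intro x y z t
  obtain ⟨x', hx⟩ := exists_vtx x
  obtain ⟨y', hy⟩ := exists_vtx y
  obtain ⟨z', hz⟩ := exists_vtx z
  obtain ⟨t', ht⟩ := exists_vtx t
  have h1 := abs_dist_sub_Dp_le hx hz
  have h2 := abs_dist_sub_Dp_le hy ht
  have h3 := abs_dist_sub_Dp_le hx hy
  have h4 := abs_dist_sub_Dp_le hz ht
  have h5 := abs_dist_sub_Dp_le hy hz
  have h6 := abs_dist_sub_Dp_le hx ht
  unfold gromov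
  rcases max_choice (Dp x' y' + Dp z' t') (Dp y' z' + Dp x' t') with e | e
  · have h := Dp_four x' y' z' t'
    rw [e] at h
    have h : (Dp x' z' + Dp y' t' : ℝ) ≤ Dp x' y' + Dp z' t' + 2 := by exact_mod_cast h
    have := min_le_left ((dist x t + dist y t - dist x y) / 2) ((dist y t + dist z t - dist y z) / 2)
    linarith
  · have h := Dp_four x' y' z' t'
    rw [e] at h
    have h : (Dp x' z' + Dp y' t' : ℝ) ≤ Dp y' z' + Dp x' t' + 2 := by exact_mod_cast h
    have := min_le_right ((dist x t + dist y t - dist x y) / 2) ((dist y t + dist z t - dist y z) / 2)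
    linarith

theorem smul_cl (g : F) (p : Pt) : g • cl p = cl (g • p) := rfl

theorem Rz_isometric : IsometricAction F Rz := by
  intro g
  refine Isometry.of_dist_eq fun x y => ?_
  obtain ⟨p, rfl⟩ := SeparationQuotient.surjective_mk x
  obtain ⟨q, rfl⟩ := SeparationQuotient.surjective_mk y
  change dist (g • cl p) (g • cl q) = dist (cl p) (cl q)
  rw [smul_cl, smul_cl, dist_cl, dist_cl, Pt.dist_smul]

theorem Rz_acylindrical : ∃ κ N : ℝ, 10 ≤ κ ∧ 0 < N ∧ AcylindricalAction F Rz 10 κ N := by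
  obtain ⟨κ, N, H⟩ := acyl_of_key wd_tree Dp_additive 40 (by omega) Dp_key 1002
  refine ⟨κ + 10, N + 1, by linarith [Nat.cast_nonneg (α := ℝ) κ], by positivity, ?_⟩
  intro x y hxy
  obtain ⟨u, hu⟩ := exists_vtx x
  obtain ⟨v, hv⟩ := exists_vtx y
  have h1 : κ ≤ Dp u v := by
    have := (abs_dist_sub_Dp_le hu hv).1
    have : (κ : ℝ) ≤ Dp u v := by linarith
    exact_mod_cast this
  obtain ⟨hfin, hcard⟩ := H u v h1
  have move : ∀ (g : F) (x : Rz) (u : F), dist x (cl (Pt.vtx u)) ≤ 1 →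
      dist (g • x) x ≤ 100 * 10 → Dp u (g * u) ≤ 1002 := by
    intro g x u hu hg
    have hgu : dist (g • x) (cl (Pt.vtx (g * u))) ≤ 1 := by
      have := (Rz_isometric g).dist_eq x (cl (Pt.vtx u))
      simp only [smul_cl, Pt.smul_vtx] at this
      rwa [this]
    have := (abs_dist_sub_Dp_le hgu hu).2
    rw [Dp_additive.symm]
    have : (Dp (g * u) u : ℝ) ≤ 1002 := by linarith
    exact_mod_cast this
  have hsub : {g : F | dist (g • x) x ≤ 100 * 10 ∧ dist (g • y) y ≤ 100 * 10} ⊆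
      {h : F | Dp u (h * u) ≤ 1002 ∧ Dp v (h * v) ≤ 1002} :=
    fun g hg => ⟨move g x u hu hg.1, move g y v hv hg.2⟩
  refine ⟨hfin.subset hsub, ?_⟩
  have := (Set.ncard_le_ncard hsub hfin).trans hcard
  have : ({g : F | dist (g • x) x ≤ 100 * 10 ∧ dist (g • y) y ≤ 100 * 10}.ncard : ℝ) ≤ N := by
    exact_mod_cast this
  linarith

theorem Rz_unbounded : ∃ x : Rz, ¬ Bornology.IsBounded (MulAction.orbit F x) := by
  refine ⟨cl (Pt.vtx 1), fun hb => ?_⟩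
  obtain ⟨C, hC⟩ := Metric.isBounded_iff.1 hb
  obtain ⟨k, hk⟩ := exists_nat_gt C
  have h1 := hC (MulAction.mem_orbit_self (M := F) _)
    (MulAction.mem_orbit (cl (Pt.vtx 1)) (vv 5000 ^ k))
  rw [smul_cl, Pt.smul_vtx, mul_one, dist_cl_vtx] at h1
  have : (k : ℝ) ≤ Dp 1 (vv 5000 ^ k) := by exact_mod_cast le_Dp_vv le_rfl k
  linarith

theorem not_loxodromic {g : F} (hg : ∀ k, Dp 1 (g ^ k) ≤ 1) : ¬ IsLoxodromic Rz g := by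
  intro h
  have h0 := h (cl (Pt.vtx 1))
  unfold stableLength at h0
  obtain ⟨k, hk⟩ := exists_nat_one_div_lt h0
  refine absurd hk (not_lt.2 ?_)
  refine (ciInf_le ⟨0, ?_⟩ (⟨k + 1, Nat.succ_pos k⟩ : ℕ+)).trans ?_
  · rintro _ ⟨n, rfl⟩
    positivity
  · have h1 := hg (k + 1)
    simp only [PNat.mk_coe, smul_cl, Pt.smul_vtx, mul_one, dist_cl_vtx]
    rw [Dp_additive.symm]
    push_cast
    gcongr
    exact_mod_cast h1

end Realization


/-! ### Growth of the free group, through an affine quotient -/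

section Growth

/-- The homomorphism to the affine group of `ℚ` with `a ↦ (x ↦ 2x)` and `b ↦ (x ↦ x + 1)`. -/
def rho : F →* Equiv.Perm ℚ :=
  FreeGroup.lift fun i => cond i (Equiv.mulLeft₀ 2 two_ne_zero) (Equiv.addRight 1)

/-- The binary logarithm of the linear part of `rho`. -/
def lg : F →* Multiplicative ℤ :=
  FreeGroup.lift fun i => cond i (Multiplicative.ofAdd 1) 1

theorem rho_a (x : ℚ) : rho ga x = 2 * x := by simp [rho]
theorem rho_b (x : ℚ) : rho gb x = x + 1 := by simp [rho]
theorem lg_a : (lg ga).toAdd = 1 := by simp [lg]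
theorem lg_b : (lg gb).toAdd = 0 := by simp [lg]

theorem rho_apply (g : F) : ∀ x : ℚ, rho g x = 2 ^ (lg g).toAdd * x + rho g 0 := by
  have hinv : ∀ g : F, (∀ x : ℚ, rho g x = 2 ^ (lg g).toAdd * x + rho g 0) →
      ∀ x : ℚ, rho g⁻¹ x = 2 ^ (lg g⁻¹).toAdd * x + rho g⁻¹ 0 := by
    intro g hg x
    apply (rho g).injective
    have e : ∀ y, rho g (rho g⁻¹ y) = y := fun y => by
      rw [← Equiv.Perm.mul_apply, ← map_mul, mul_inv_cancel, map_one, Equiv.Perm.one_apply]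
    have h0 := hg (rho g⁻¹ 0)
    rw [e] at h0
    rw [e, hg, mul_add, add_assoc, ← h0, add_zero, map_inv, toAdd_inv, ← mul_assoc,
      ← zpow_add₀ two_ne_zero, add_neg_cancel, zpow_zero, one_mul]
  have hof : ∀ i, ∀ x : ℚ, rho (FreeGroup.of i) x =
      2 ^ (lg (FreeGroup.of i)).toAdd * x + rho (FreeGroup.of i) 0 := by
    rintro (_ | _) x
    · change rho gb x = 2 ^ (lg gb).toAdd * x + rho gb 0
      rw [rho_b, rho_b, lg_b]; simp
    · change rho ga x = 2 ^ (lg ga).toAdd * x + rho ga 0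
      rw [rho_a, rho_a, lg_a]; simp
  induction g using FreeGroup.induction_on with
  | C1 => intro x; simp
  | of i => exact hof i
  | inv_of i h => exact hinv _ h
  | mul g h hg hh =>
    intro x
    rw [map_mul, map_mul, toAdd_mul, Equiv.Perm.mul_apply, Equiv.Perm.mul_apply, hg, hh,
      hg (rho h 0), zpow_add₀ two_ne_zero]
    ring

theorem rho_zero_ne {p q : F} (h : rho p ≠ rho q) (hl : lg p = lg q) : rho p 0 ≠ rho q 0 := by
  intro h0
  apply h
  ext x
  rw [rho_apply p, rho_apply q, h0, hl]

/-- The product of the word in the two letters `p`, `q` spelled by a list. -/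
def bword (p q : F) : List Bool → F
  | [] => 1
  | i :: l => cond i q p * bword p q l

/-- The number with given digits `0`, `1` in base `2 * t`, least significant digit first. -/
def digs (t : ℤ) : List Bool → ℤ
  | [] => 0
  | i :: l => 2 * (t * digs t l) + cond i 1 0

theorem digs_inj {t : ℤ} (ht : t ≠ 0) : ∀ l l' : List Bool, l.length = l'.length →
    digs t l = digs t l' → l = l'
  | [], [], _, _ => rfl
  | [], _ :: _, h, _ => by simp at h
  | _ :: _, [], h, _ => by simp at h
  | i :: l, j :: l', h, e => by
    simp only [digs] at e
    have hij : i = j := by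
      cases i <;> cases j <;> simp only [cond_true, cond_false] at e <;> first | rfl | omega
    subst hij
    have htd : t * digs t l = t * digs t l' := by omega
    rw [digs_inj ht l l' (by simpa using h) (mul_left_cancel₀ ht htd)]

/-- The translation part of a word of length `n` in two affine maps with the same linear part
`2 * t` depends affinely on the number whose base `2 * t` digits are the letters. -/
theorem rho_bword {p q : F} {t : ℤ} (hp : (2 : ℚ) ^ (lg p).toAdd = 2 * t)
    (hq : (2 : ℚ) ^ (lg q).toAdd = 2 * t) (n : ℕ) : ∃ C : ℚ, ∀ l : List Bool, l.length = n →
      rho (bword p q l) 0 = C + (rho q 0 - rho p 0) * digs t l := by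
  induction n with
  | zero =>
    refine ⟨0, fun l hl => ?_⟩
    rw [List.length_eq_zero_iff.1 hl]
    simp [bword, digs]
  | succ n ih =>
    obtain ⟨C, hC⟩ := ih
    refine ⟨2 * t * C + rho p 0, fun l hl => ?_⟩
    obtain ⟨i, l, rfl⟩ := List.exists_cons_of_length_eq_add_one hl
    rw [bword, map_mul, Equiv.Perm.mul_apply, hC l (by simpa using hl)]
    cases i
    · rw [cond_false, rho_apply p, hp, digs]; push_cast; simp; ring
    · rw [cond_true, rho_apply q, hq, digs]; push_cast; simp; ring

theorem bword_mem {p q : F} {V : Set F} (hp : p ∈ V) (hq : q ∈ V) :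
    ∀ l : List Bool, bword p q l ∈ V ^ l.length
  | [] => by simp [bword]
  | i :: l => by
    rw [List.length_cons, pow_succ']
    refine Set.mul_mem_mul ?_ (bword_mem hp hq l)
    cases i
    · exact hp
    · exact hq

theorem finite_pow {V : Set F} (hV : V.Finite) : ∀ n : ℕ, (V ^ n).Finite
  | 0 => by rw [pow_zero]; exact Set.finite_one
  | n + 1 => by rw [pow_succ]; exact (finite_pow hV n).mul hV

theorem ncard_pow_le {V : Set F} (hV : V.Finite) (n : ℕ) : (V ^ n).ncard ≤ V.ncard ^ n := by
  classical
  lift V to Finset F using hV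
  rw [← Finset.coe_pow, Set.ncard_coe_finset, Set.ncard_coe_finset]
  exact Finset.card_pow_le

/-- Two affine maps with different images of `0` and the same linear part `2 ^ k`, `k ≥ 1`,
generate a free semigroup. -/
theorem two_pow_le_ncard {p q : F} {V : Set F} (hV : V.Finite) (hp : p ∈ V) (hq : q ∈ V)
    (h : rho p ≠ rho q) (hl : lg p = lg q) (hpos : 0 < (lg p).toAdd) (n : ℕ) :
    2 ^ n ≤ (V ^ n).ncard := by
  obtain ⟨k, hk⟩ := Int.eq_ofNat_of_zero_le (a := (lg p).toAdd - 1) (by omega)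
  have hp2 : (2 : ℚ) ^ (lg p).toAdd = 2 * ((2 ^ k : ℤ) : ℚ) := by
    have : (lg p).toAdd = ((k + 1 : ℕ) : ℤ) := by push_cast; omega
    rw [this, zpow_natCast, pow_succ']
    push_cast
    rfl
  have hq2 := hp2
  rw [hl] at hq2
  obtain ⟨C, hC⟩ := rho_bword hp2 hq2 n
  have hinj : Function.Injective fun f : Fin n → Bool => bword p q (List.ofFn f) := by
    intro f g hfg
    have h1 := hC _ (List.length_ofFn (f := f))
    have h2 := hC _ (List.length_ofFn (f := g))
    dsimp only at hfg
    rw [hfg, h2] at h1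
    have h3 := mul_left_cancel₀ (sub_ne_zero.2 (rho_zero_ne h hl).symm) (add_left_cancel h1)
    exact List.ofFn_injective (digs_inj (t := 2 ^ k) (by positivity) _ _ (by simp)
      (Int.cast_injective h3.symm))
  have hsub : Set.range (fun f : Fin n → Bool => bword p q (List.ofFn f)) ⊆ V ^ n := by
    rintro _ ⟨f, rfl⟩
    have := bword_mem hp hq (List.ofFn f)
    rwa [List.length_ofFn] at this
  calc 2 ^ n = (Set.range fun f : Fin n → Bool => bword p q (List.ofFn f)).ncard := by
        rw [Set.ncard_range_of_injective hinj]
        simp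
    _ ≤ (V ^ n).ncard := Set.ncard_le_ncard hsub (finite_pow hV n)

/-- Any symmetric generating set has two elements of length two satisfying the hypotheses of
`two_pow_le_ncard`. -/
theorem exists_pair {U : Set F} (hs : U⁻¹ = U) (hg : Subgroup.closure U = ⊤) :
    ∃ p ∈ U ^ 2, ∃ q ∈ U ^ 2, rho p ≠ rho q ∧ lg p = lg q ∧ 0 < (lg p).toAdd := by
  have hinv : ∀ x ∈ U, x⁻¹ ∈ U := fun x hx => by rw [← hs]; simpa using hx
  obtain ⟨u, hu, hu0⟩ : ∃ u ∈ U, (lg u).toAdd ≠ 0 := by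
    by_contra! hc
    have hle : Subgroup.closure U ≤ lg.ker := by
      rw [Subgroup.closure_le]
      intro x hx
      exact toAdd_eq_zero.1 (hc x hx)
    rw [hg] at hle
    have := hle (Subgroup.mem_top ga)
    have h1 := lg_a
    rw [MonoidHom.mem_ker.1 this] at h1
    simp at h1
  obtain ⟨v, hv, huv⟩ : ∃ v ∈ U, rho (u * v) ≠ rho (v * u) := by
    by_contra! hc
    have hle : Subgroup.closure U ≤ (Subgroup.centralizer {rho u}).comap rho := by
      rw [Subgroup.closure_le]
      intro x hx
      rw [SetLike.mem_coe, Subgroup.mem_comap, Subgroup.mem_centralizer_singleton_iff]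
      rw [← map_mul, ← map_mul, hc x hx]
    rw [hg] at hle
    have := hle (Subgroup.mem_top gb)
    rw [Subgroup.mem_comap, Subgroup.mem_centralizer_singleton_iff] at this
    have h0 := DFunLike.congr_fun this 0
    rw [Equiv.Perm.mul_apply, Equiv.Perm.mul_apply, rho_b, rho_b, rho_apply u (0 + 1)] at h0
    have h1 : (2 : ℚ) ^ (lg u).toAdd = 1 := by linarith
    rw [zpow_eq_one_iff_right₀ (by norm_num) (by norm_num)] at h1
    exact hu0 h1
  have key : ∃ p ∈ U ^ 2, ∃ q ∈ U ^ 2, rho p ≠ rho q ∧ lg p = lg q ∧ (lg p).toAdd ≠ 0 := by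
    rw [sq]
    by_cases h0 : (lg (u * v)).toAdd = 0
    · refine ⟨_, Set.mul_mem_mul hu (hinv v hv), _, Set.mul_mem_mul (hinv v hv) hu, ?_, ?_, ?_⟩
      · intro h
        apply huv
        have e1 : u * v = v * (v⁻¹ * u) * v := by group
        have e2 : v * u = v * (u * v⁻¹) * v := by group
        rw [e1, e2]
        simp only [map_mul] at h ⊢
        rw [h]
      · rw [map_mul, map_mul, mul_comm]
      · rw [map_mul, toAdd_mul] at h0
        rw [map_mul, toAdd_mul, map_inv, toAdd_inv]
        omega
    · exact ⟨_, Set.mul_mem_mul hu hv, _, Set.mul_mem_mul hv hu, huv,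
        by rw [map_mul, map_mul, mul_comm], h0⟩
  obtain ⟨p, hp, q, hq, h, hl, h0⟩ := key
  rcases lt_or_gt_of_ne h0 with hneg | hpos
  · have hinv2 : ∀ x ∈ U ^ 2, x⁻¹ ∈ U ^ 2 := fun x hx => by
      have : (U ^ 2)⁻¹ = U ^ 2 := by rw [← inv_pow, hs]
      rw [← this]; simpa using hx
    refine ⟨_, hinv2 p hp, _, hinv2 q hq, ?_, ?_, ?_⟩
    · rw [map_inv, map_inv]; exact fun e => h (inv_injective e)
    · rw [map_inv, map_inv, hl]
    · rw [map_inv, toAdd_inv]; omega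
  · exact ⟨p, hp, q, hq, h, hl, hpos⟩

theorem le_growthRate {U : Set F} (hU : U.Finite) (hs : U⁻¹ = U)
    (hg : Subgroup.closure U = ⊤) : Real.log 2 / 2 ≤ growthRate U := by
  obtain ⟨p, hp, q, hq, h, hl, hpos⟩ := exists_pair hs hg
  have hcard : ∀ n : ℕ, ((U ^ n).ncard : ℝ) ≤ (U.ncard : ℝ) ^ n := fun n => by
    exact_mod_cast ncard_pow_le hU n
  have hne : U.Nonempty := by
    by_contra hc
    rw [Set.not_nonempty_iff_eq_empty.1 hc] at hp
    simp [sq] at hp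
  have hU1 : (1 : ℝ) ≤ U.ncard := by exact_mod_cast (Set.ncard_pos hU).2 hne
  unfold growthRate
  refine le_limsup_of_frequently_le ?_ ?_
  · rw [frequently_atTop]
    intro m
    refine ⟨2 * (m + 1), by omega, ?_⟩
    have h2 : ((2 : ℝ) ^ (m + 1)) ≤ ((U ^ (2 * (m + 1))).ncard : ℝ) := by
      rw [pow_mul]
      exact_mod_cast two_pow_le_ncard (finite_pow hU 2) hp hq h hl hpos (m + 1)
    have h3 := Real.log_le_log (by positivity) h2
    rw [Real.log_pow] at h3
    rw [le_div_iff₀ (by positivity)]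
    push_cast at h3 ⊢
    linarith
  · refine ⟨Real.log U.ncard, eventually_map.2 (eventually_atTop.2 ⟨1, fun n hn => ?_⟩)⟩
    have hn' : (0 : ℝ) < n := by exact_mod_cast hn
    have hpos : (0 : ℝ) < (U ^ n).ncard := by
      exact_mod_cast (Set.ncard_pos (finite_pow hU n)).2 hne.pow
    beta_reduce
    rw [div_le_iff₀ hn', mul_comm, ← Real.log_pow]
    exact Real.log_le_log hpos (hcard n)

theorem not_virtuallyCyclic : ¬ VirtuallyCyclic F := by
  rintro ⟨K, hK, hfin⟩
  obtain ⟨m, hm, -, ha⟩ := Subgroup.exists_pow_mem_of_index_ne_zero hfin.index_ne_zero ga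
  obtain ⟨l, hl', -, hb⟩ := Subgroup.exists_pow_mem_of_index_ne_zero hfin.index_ne_zero gb
  obtain ⟨g, hg⟩ := hK.exists_generator
  obtain ⟨i, hi⟩ := Subgroup.mem_zpowers_iff.1 (hg ⟨_, ha⟩)
  obtain ⟨j, hj⟩ := Subgroup.mem_zpowers_iff.1 (hg ⟨_, hb⟩)
  have hc : ga ^ m * gb ^ l = gb ^ l * ga ^ m := by
    have := zpow_mul_comm g i j
    rw [hi, hj] at this
    exact congrArg Subtype.val this
  have hA : ∀ (m : ℕ) (x : ℚ), rho (ga ^ m) x = 2 ^ m * x := by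
    intro m
    induction m with
    | zero => simp
    | succ m ih => intro x; rw [pow_succ, map_mul, Equiv.Perm.mul_apply, rho_a, ih]; ring
  have hB : ∀ (l : ℕ) (x : ℚ), rho (gb ^ l) x = x + l := by
    intro l
    induction l with
    | zero => simp
    | succ l ih =>
      intro x; rw [pow_succ, map_mul, Equiv.Perm.mul_apply, rho_b, ih]; push_cast; ring
  have h0 := DFunLike.congr_fun (congrArg rho hc) 0
  rw [map_mul, map_mul, Equiv.Perm.mul_apply, Equiv.Perm.mul_apply, hA, hA, hB, hB] at h0
  have h2 : (1 : ℚ) < 2 ^ m := one_lt_pow₀ (by norm_num) (by omega)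
  have h3 : (0 : ℚ) < l := by exact_mod_cast hl'
  nlinarith

end Growth

/-! ### Generating sets without short loxodromic elements -/

/-- The preimage of the standard symmetric generating set under `phi ^ n`. -/
def genSet (n : ℕ) : Set F := phiN n ⁻¹' {x | ∃ i, x = FreeGroup.of i ∨ x = (FreeGroup.of i)⁻¹}

theorem genSet_finite (n : ℕ) : (genSet n).Finite := by
  refine Set.Finite.preimage (phiN_bijective n).1.injOn ?_
  have : {x : F | ∃ i, x = FreeGroup.of i ∨ x = (FreeGroup.of i)⁻¹} =
      ⋃ i : Bool, {FreeGroup.of i, (FreeGroup.of i)⁻¹} := by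
    ext x; simp
  rw [this]
  exact Set.finite_iUnion fun i => Set.toFinite _

theorem genSet_inv (n : ℕ) : (genSet n)⁻¹ = genSet n := by
  ext x
  simp only [genSet, Set.mem_inv, Set.mem_preimage, Set.mem_ofPred_eq, map_inv,
    inv_eq_iff_eq_inv]
  exact exists_congr fun i => or_comm

theorem closure_genSet (n : ℕ) : Subgroup.closure (genSet n) = ⊤ := by
  have h : Set.range FreeGroup.of ⊆ phiN n '' genSet n := by
    rintro _ ⟨i, rfl⟩
    obtain ⟨x, hx⟩ := (phiN_bijective n).2 (FreeGroup.of i)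
    exact ⟨x, ⟨i, Or.inl hx⟩, hx⟩
  have h1 : (Subgroup.closure (genSet n)).map (phiN n) = ⊤ := by
    rw [MonoidHom.map_closure, eq_top_iff, ← FreeGroup.closure_range_of]
    exact Subgroup.closure_mono h
  rw [← Subgroup.comap_map_eq_self_of_injective (phiN_bijective n).1 (Subgroup.closure (genSet n)),
    h1, Subgroup.comap_top]

theorem norm_le_of_mem_pow (n : ℕ) : ∀ (k : ℕ) (g : F), g ∈ genSet n ^ k → (phiN n g).norm ≤ k
  | 0, g, hg => by
    rw [pow_zero, Set.mem_one] at hg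
    simp [hg]
  | k + 1, g, hg => by
    rw [pow_succ] at hg
    obtain ⟨x, hx, y, hy, rfl⟩ := Set.mem_mul.1 hg
    rw [map_mul]
    refine (FreeGroup.norm_mul_le _ _).trans (add_le_add (norm_le_of_mem_pow n k x hx) ?_)
    obtain ⟨i, hi | hi⟩ := hy
    · rw [hi, FreeGroup.norm_of]
    · rw [hi, FreeGroup.norm_inv_eq, FreeGroup.norm_of]

end NSL

/-- there is an acylindrically hyperbolic finitely generated
group of uniform exponential growth without the short loxodromic property. -/
theorem exists_no_short_loxodromic_witness : Nonempty NoShortLoxodromicWitness := by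
  obtain ⟨κ, N, hκ, hN, hacyl⟩ := NSL.Rz_acylindrical
  exact ⟨{
    G := NSL.F
    X := NSL.Rz
    δ := 10
    κ := κ
    N := N
    δ_pos := by norm_num
    δ_le_κ := hκ
    N_pos := hN
    fg := inferInstance
    hyperbolic := NSL.Rz_hyperbolic
    geodesic := NSL.Rz_geodesic
    isometric := NSL.Rz_isometric
    acylindrical := hacyl
    unbounded_orbit := NSL.Rz_unbounded
    not_virtually_cyclic := NSL.not_virtuallyCyclic
    uniform_exponential_growth := ⟨Real.log 2 / 2, by positivity,
      fun _ hU hs hg => NSL.le_growthRate hU hs hg⟩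
    no_short_loxodromic := fun n _ => ⟨NSL.genSet n, NSL.genSet_finite n, NSL.genSet_inv n,
      NSL.closure_genSet n, fun g hg => NSL.not_loxodromic
        (NSL.Dp_pow_le (NSL.norm_le_of_mem_pow n n g hg))⟩ }⟩
end
end
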